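/- arXiv:2102.08508 — 3 statements merged into one kernel-verified Lean document; each statement's English description precedes it below -/
import Mathlib

section
/- For all integers n ≥ 3, 2 ≤ j ≤ n−1, and 0 ≤ d ≤ n−1, one has E(n,d,j) = Σ_{l=1}^{n−2} Σ_{k≥0} Σ_{u=0}^{j−2} binom(j−2,u)·binom(n−j−1, l−1−u)·A(n−l−2, d−k−1)·( A(l, l−1−k, u+1) + A(l, k−1, u+1) ) + A(n−2, d−1, j−1) − A(n−2, d−2, j−1), where the inner sum over k has only finitely many nonzero terms. -/
/-- The word `π₁π₂⋯πₙ` of a permutation of `[n] = {1, …, n}`. -/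
def permWord (n : ℕ) (π : Equiv.Perm (Fin n)) : ℕ → ℕ :=
  fun i => if h : i < n then (π ⟨i, h⟩ : ℕ) + 1 else 0

/-- The number of descents of a permutation of `[n]`. -/
def desNum (n : ℕ) (π : Equiv.Perm (Fin n)) : ℕ :=
  ((Finset.range (n - 1)).filter (fun i => permWord n π (i + 1) < permWord n π i)).card

/-- Eulerian number `A(n,d)` (with `A(0,0) = 1`, and `0` for negative arguments). -/
noncomputable def eulerian (n d : ℤ) : ℕ :=
  if 0 ≤ n ∧ 0 ≤ d then
    Nat.card {π : Equiv.Perm (Fin n.toNat) // desNum n.toNat π = d.toNat}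
  else 0

/-- `A(n,d,j)`: the number of permutations of `[n]` with `d` descents and first
letter `j`; by convention `0` unless `n ≥ 1`, `0 ≤ d ≤ n-1` and `1 ≤ j ≤ n`. -/
noncomputable def eulerianFirst (n d j : ℤ) : ℕ :=
  if 1 ≤ n ∧ 0 ≤ d ∧ 1 ≤ j then
    Nat.card {π : Equiv.Perm (Fin n.toNat) //
      desNum n.toNat π = d.toNat ∧ permWord n.toNat π 0 = j.toNat}
  else 0

/-- `π` has the three-letter word `a b c` as a factor. -/
def HasFactor (n : ℕ) (π : Equiv.Perm (Fin n)) (a b c : ℕ) : Prop :=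
  ∃ k, k + 2 < n ∧ permWord n π k = a ∧ permWord n π (k + 1) = b ∧ permWord n π (k + 2) = c

/-- `E(n,d,j)`: the number of permutations of `[n]` with `d` descents having
`1 n j` or `j n 1` as a factor. -/
noncomputable def Ecount (n d j : ℕ) : ℕ :=
  Nat.card {π : Equiv.Perm (Fin n) //
    desNum n π = d ∧ (HasFactor n π 1 n j ∨ HasFactor n π j n 1)}

/-- Binomial coefficient with integer lower index: `0` if the lower index is negative. -/
def zchoose (a b : ℤ) : ℤ :=
  if 0 ≤ b then (a.toNat.choose b.toNat : ℤ) else 0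

/-!
Deleting the factor from a word `x · 1 n j · t`, or from `tᴿ · j n 1 · x` with `tᴿ` the reversal of
`t`, leaves a pair `(x, t)` of words that together use each letter of `R = [n] ∖ {1, n, j}` once.
If `t` has `l - 1` letters, the second word has `des x + 1 + k` descents with
`k = des (jt)ᴿ = l - 1 - des (jt)`, while the first has `des x + 1 + k` descents with
`k = des (jt) + 1`, unless `x` is empty, when it has one fewer; correcting for these exceptional
words yields the two terms outside the sum. For a fixed letter set `T` of `t`, the words `x` are
counted by an Eulerian number and the words `jt` by a refined one, and these depend on `T` only
through `l` and the number `u` of letters of `T` below `j`.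
-/

section Words

open Finset

/-- The number of descents of a word over an ordered alphabet. -/
def descents {α : Type*} [LT α] [DecidableLT α] : List α → ℕ
  | a :: b :: w => (if b < a then 1 else 0) + descents (b :: w)
  | _ => 0

/-- The words using each letter of `S` exactly once and no other letter. -/
def arrangements {α : Type*} (S : Finset α) : Finset (List α) :=
  ⟨S.val.lists, Multiset.lists_nodup_finset S⟩

variable {α : Type*}

theorem mem_arrangements {S : Finset α} {w : List α} :
    w ∈ arrangements S ↔ w.Nodup ∧ ∀ a, a ∈ w ↔ a ∈ S := by
  rw [arrangements, mem_mk, Multiset.mem_lists_iff]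
  refine ⟨fun h ↦ ?_, fun ⟨hw, h⟩ ↦ ?_⟩
  · exact ⟨Multiset.coe_nodup.1 (Eq.subst h S.nodup), fun a ↦ by rw [← mem_val, h]; rfl⟩
  · exact (S.nodup.ext (Multiset.coe_nodup.2 hw)).2 fun a ↦ (h a).symm

theorem length_of_mem_arrangements {S : Finset α} {w : List α} (hw : w ∈ arrangements S) :
    w.length = #S := by
  rw [arrangements, mem_mk, Multiset.mem_lists_iff] at hw
  rw [card_def, hw]
  rfl

theorem card_arrangements (S : Finset α) : #(arrangements S) = (#S).factorial := by
  rw [arrangements, card_mk, ← S.coe_toList, Multiset.lists_coe, Multiset.coe_card,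
    List.length_permutations, length_toList]

theorem eq_of_append_append_eq {x x' f t t' : List α} (hf : f ≠ [])
    (hw : (x ++ f ++ t).Nodup) (h : x ++ f ++ t = x' ++ f ++ t') : x = x' ∧ t = t' := by
  classical
  obtain ⟨a, f, rfl⟩ := List.exists_cons_of_ne_nil hf
  have idxOf_eq : ∀ y s : List α, (y ++ (a :: f) ++ s).Nodup →
      (y ++ (a :: f) ++ s).idxOf a = y.length := by
    intro y s hy
    have : a ∉ y := by grind
    simp [List.idxOf_append, this]
  have hlen : x.length = x'.length := by
    rw [← idxOf_eq x t hw, h, idxOf_eq x' t' (h ▸ hw)]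
  obtain ⟨hxf, rfl⟩ := List.append_inj h (by simp [hlen])
  exact ⟨List.append_cancel_right hxf, rfl⟩

section Split

variable [DecidableEq α]

/-- The pairs `(x, t)` of words whose concatenation is an arrangement of `R`, classified by the
set `T` of letters of `t`. -/
def splits (R : Finset α) : Finset (List α × List α) :=
  R.powerset.biUnion fun T ↦ arrangements (R \ T) ×ˢ arrangements T

theorem mem_splits {R : Finset α} {p : List α × List α} :
    p ∈ splits R ↔ p.1 ++ p.2 ∈ arrangements R := by
  simp only [splits, mem_biUnion, mem_powerset, mem_product, mem_arrangements]
  exact ⟨by grind, fun h ↦ ⟨p.2.toFinset, by grind [List.mem_toFinset]⟩⟩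

theorem card_filter_splits (R : Finset α) (P : List α × List α → Prop) [DecidablePred P] :
    #{p ∈ splits R | P p} =
      ∑ T ∈ R.powerset, #{p ∈ arrangements (R \ T) ×ˢ arrangements T | P p} := by
  rw [splits, filter_biUnion, card_biUnion]
  refine fun T _ T' _ hne ↦ disjoint_left.2 fun p hp hp' ↦ hne ?_
  simp only [mem_filter, mem_product, mem_arrangements] at hp hp'
  grind

theorem card_filter_splits_swap_reverse (R : Finset α) (P : List α → List α → Prop)
    [DecidableRel P] :
    #{p ∈ splits R | P p.1 p.2} = #{p ∈ splits R | P p.2.reverse p.1} := by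
  have mem_iff (p : List α × List α) : (p.2.reverse, p.1) ∈ splits R ↔ p ∈ splits R := by
    simp only [mem_splits, mem_arrangements]
    grind
  refine card_nbij' (fun p ↦ (p.2, p.1.reverse)) (fun p ↦ (p.2.reverse, p.1)) ?_ ?_ ?_ ?_ <;>
    grind [Set.MapsTo, Set.LeftInvOn]

theorem card_filter_splits_nil (R : Finset α) (P : List α → Prop) [DecidablePred P] :
    #{p ∈ splits R | p.1 = [] ∧ P p.2} = #{t ∈ arrangements R | P t} := by
  refine card_nbij' Prod.snd (fun t ↦ ([], t)) ?_ ?_ ?_ ?_ <;>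
    grind [Set.MapsTo, Set.LeftInvOn, mem_splits]

theorem card_arrangements_filter_infix {R S : Finset α} {f : List α} (hRS : R ⊆ S) (hf : f ≠ [])
    (hfS : f ∈ arrangements (S \ R)) (P : List α → Prop) [DecidablePred P] :
    #{w ∈ arrangements S | P w ∧ f <:+: w} = #{p ∈ splits R | P (p.1 ++ f ++ p.2)} := by
  have mem_iff (x t : List α) : x ++ f ++ t ∈ arrangements S ↔ (x, t) ∈ splits R := by
    simp only [mem_splits, mem_arrangements] at hfS ⊢
    grind
  symm
  refine card_bij (fun p _ ↦ p.1 ++ f ++ p.2) ?_ ?_ ?_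
  · rintro ⟨x, t⟩ hp
    rw [mem_filter] at hp ⊢
    exact ⟨(mem_iff x t).2 hp.1, hp.2, x, t, rfl⟩
  · rintro ⟨x, t⟩ hp ⟨x', t'⟩ - h
    have hw := (mem_arrangements.1 ((mem_iff x t).2 (mem_filter.1 hp).1)).1
    exact Prod.ext_iff.2 (eq_of_append_append_eq hf hw h)
  · intro w hw
    obtain ⟨hw, hP, x, t, rfl⟩ := mem_filter.1 hw
    exact ⟨(x, t), mem_filter.2 ⟨(mem_iff x t).1 hw, hP⟩, rfl⟩

end Split

section Descents

variable [LinearOrder α]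

@[simp] theorem descents_nil : descents ([] : List α) = 0 := rfl

@[simp] theorem descents_singleton (a : α) : descents [a] = 0 := rfl

@[simp] theorem descents_cons_cons (a b : α) (w : List α) :
    descents (a :: b :: w) = (if b < a then 1 else 0) + descents (b :: w) := rfl

theorem descents_append_cons (a : α) (v : List α) :
    ∀ x : List α, descents (x ++ a :: v) = descents (x ++ [a]) + descents (a :: v)
  | [] => by simp
  | [b] => by simp
  | b :: c :: x => by
    have := descents_append_cons a v (c :: x)
    simp only [List.cons_append, descents_cons_cons] at this ⊢
    omega

theorem descents_concat_of_forall_lt (a : α) :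
    ∀ x : List α, (∀ y ∈ x, a < y) → descents (x ++ [a]) = descents x + if x = [] then 0 else 1
  | [], _ => by simp
  | [b], h => by simpa using h
  | b :: c :: x, h => by
    have := descents_concat_of_forall_lt a (c :: x) fun y hy ↦ h y (List.mem_cons_of_mem b hy)
    simp only [List.cons_append, descents_cons_cons, reduceCtorEq, if_false] at this ⊢
    omega

theorem descents_cons_of_forall_lt {a : α} :
    ∀ {x : List α}, (∀ y ∈ x, a < y) → descents (a :: x) = descents x
  | [], _ => rfl
  | b :: x, h => by simp [(h b List.mem_cons_self).le]

theorem descents_reverse_add_descents (a : α) (w : List α) (hw : (a :: w).Nodup) :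
    descents (a :: w).reverse + descents (a :: w) = w.length := by
  induction w generalizing a with
  | nil => simp
  | cons b w ih =>
    have hab : a ≠ b := by grind
    have hbw := ih b hw.of_cons
    have happ := descents_append_cons b [a] w.reverse
    simp only [List.reverse_cons, List.append_assoc, List.cons_append, List.nil_append,
      descents_cons_cons, descents_singleton, List.length_cons] at happ hbw ⊢
    grind

theorem descents_map {β : Type*} [LinearOrder β] {f : α → β} (hf : StrictMono f) :
    ∀ w : List α, descents (w.map f) = descents w
  | [] => rfl
  | [_] => rfl
  | a :: b :: w => by
    have := descents_map hf (b :: w)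
    simp only [List.map_cons, descents_cons_cons, hf.lt_iff_lt] at this ⊢
    rw [this]

theorem descents_eq_card_filter_getD (c : α) : ∀ w : List α,
    descents w = #{i ∈ range (w.length - 1) | w.getD (i + 1) c < w.getD i c}
  | [] => rfl
  | [_] => rfl
  | a :: b :: w => by
    have := descents_eq_card_filter_getD c (b :: w)
    simp only [card_filter, List.length_cons, Nat.add_sub_cancel] at this ⊢
    rw [sum_range_succ', descents_cons_cons, this, add_comm]
    rfl

end Descents

section Eulerian

theorem ofFn_comp_perm_injective {n : ℕ} (e : Fin n ↪ α) :
    Function.Injective fun π : Equiv.Perm (Fin n) ↦ List.ofFn (e ∘ π) := fun _ _ h ↦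
  Equiv.coe_fn_injective (e.injective.comp_left (List.ofFn_injective h))

theorem image_ofFn_comp_perm [DecidableEq α] {n : ℕ} (e : Fin n ↪ α) :
    univ.image (fun π : Equiv.Perm (Fin n) ↦ List.ofFn (e ∘ π)) = arrangements (univ.map e) := by
  refine eq_of_subset_of_card_le (image_subset_iff.2 fun π _ ↦ mem_arrangements.2 ⟨?_, ?_⟩) ?_
  · exact List.nodup_ofFn.2 (e.injective.comp π.injective)
  · intro a
    simp only [List.mem_ofFn, Function.comp_apply, mem_map, mem_univ, true_and]
    exact (π.surjective.exists (p := fun i ↦ e i = a)).symm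
  · rw [card_arrangements, card_image_of_injective _ (ofFn_comp_perm_injective e)]
    simp [Fintype.card_perm]

theorem card_perm_eq_card_arrangements_filter {n : ℕ} (e : Fin n ↪ α)
    {P : Equiv.Perm (Fin n) → Prop} {Q : List α → Prop} [DecidablePred Q]
    (h : ∀ π : Equiv.Perm (Fin n), P π ↔ Q (List.ofFn (e ∘ π))) :
    Nat.card {π // P π} = #{w ∈ arrangements (univ.map e) | Q w} := by
  classical
  simp only [h, ← image_ofFn_comp_perm e, filter_image,
    card_image_of_injective _ (ofFn_comp_perm_injective e), Nat.card_eq_fintype_card,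
    Fintype.card_subtype]

theorem permWord_eq_getD {n : ℕ} (π : Equiv.Perm (Fin n)) (i : ℕ) :
    permWord n π i = (List.ofFn fun k ↦ (π k : ℕ) + 1).getD i 0 := by
  by_cases h : i < n <;> simp [permWord, h]

variable [LinearOrder α]

theorem desNum_eq_descents_ofFn {n : ℕ} (e : Fin n ↪o α) (π : Equiv.Perm (Fin n)) :
    desNum n π = descents (List.ofFn (e.toEmbedding ∘ π)) := by
  have hsucc : StrictMono fun i : Fin n ↦ (i : ℕ) + 1 := fun i k h ↦ Nat.succ_lt_succ h
  rw [← List.map_ofFn, descents_map (f := e.toEmbedding) e.strictMono, ← descents_map hsucc,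
    List.map_ofFn, descents_eq_card_filter_getD 0, List.length_ofFn]
  simp only [desNum, permWord_eq_getD, Function.comp_def]

/-- The Eulerian number over an arbitrary alphabet: the number of arrangements of `S` with `a`
descents. -/
def eulerianOn (S : Finset α) (a : ℤ) : ℕ :=
  #{w ∈ arrangements S | (descents w : ℤ) = a}

/-- The refined Eulerian number over an arbitrary alphabet: the number of words with `a` descents
that consist of the letter `c` followed by an arrangement of `T`. -/
def eulerianConsOn (c : α) (T : Finset α) (a : ℤ) : ℕ :=
  #{t ∈ arrangements T | (descents (c :: t) : ℤ) = a}

theorem eulerian_card (S : Finset α) (a : ℤ) : eulerian #S a = eulerianOn S a := by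
  rw [eulerian, eulerianOn]
  split_ifs with h
  · rw [Int.toNat_natCast, card_perm_eq_card_arrangements_filter (S.orderEmbOfFin rfl).toEmbedding
      (Q := fun w ↦ (descents w : ℤ) = a), map_orderEmbOfFin_univ]
    intro π
    rw [← desNum_eq_descents_ofFn]
    omega
  · exact (card_eq_zero.2 (filter_eq_empty_iff.2 fun w _ ↦ by omega)).symm

theorem card_filter_lt_orderEmbedding {n : ℕ} (e : Fin n ↪o α) (i : Fin n) :
    #{y ∈ univ.map e.toEmbedding | y < e i} = i := by
  simp [filter_map, filter_gt_eq_Iio]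

theorem eulerianConsOn_eq_card_filter_head? {c : α} {T : Finset α} (hc : c ∉ T) (a : ℤ) :
    eulerianConsOn c T a =
      #{w ∈ arrangements (insert c T) | (descents w : ℤ) = a ∧ w.head? = some c} := by
  have cons_mem_iff (t : List α) : c :: t ∈ arrangements (insert c T) ↔ t ∈ arrangements T := by
    simp only [mem_arrangements]
    grind
  refine card_nbij' (List.cons c) List.tail ?_ ?_ ?_ ?_
  all_goals
    grind [Set.MapsTo, Set.LeftInvOn, List.head?_eq_some_iff]

theorem eulerianFirst_card {c : α} {T : Finset α} (hc : c ∉ T) (a : ℤ) :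
    eulerianFirst (#T + 1) a (#{y ∈ T | y < c} + 1) = eulerianConsOn c T a := by
  have hcard : #(insert c T) = #T + 1 := card_insert_of_notMem hc
  let e := (insert c T).orderEmbOfFin hcard
  have he : univ.map e.toEmbedding = insert c T := map_orderEmbOfFin_univ _ hcard
  have hrank (i : Fin (#T + 1)) : e i = c ↔ (i : ℕ) = #{y ∈ T | y < c} := by
    obtain ⟨k, -, hk⟩ := mem_map.1 (he ▸ mem_insert_self c T : c ∈ univ.map e.toEmbedding)
    change e k = c at hk
    have hrank_k := card_filter_lt_orderEmbedding e k
    rw [he, hk, filter_insert, if_neg (lt_irrefl c)] at hrank_k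
    rw [← hk, e.injective.eq_iff, Fin.ext_iff, hk, hrank_k]
  rw [eulerianFirst, eulerianConsOn_eq_card_filter_head? hc]
  split_ifs with h
  · rw [← he]
    refine card_perm_eq_card_arrangements_filter e.toEmbedding
      (Q := fun w ↦ (descents w : ℤ) = a ∧ w.head? = some c) fun π ↦ and_congr ?_ ?_
    · rw [← desNum_eq_descents_ofFn]
      change desNum (#T + 1) π = a.toNat ↔ _
      omega
    · simp [permWord, hrank]
  · exact (card_eq_zero.2 (filter_eq_empty_iff.2 fun w _ ↦ by omega)).symm

theorem hasFactor_iff_infix {n : ℕ} (π : Equiv.Perm (Fin n)) (a b c : ℕ) :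
    HasFactor n π a b c ↔ [a, b, c] <:+: List.ofFn fun k ↦ (π k : ℕ) + 1 := by
  simp only [HasFactor, List.infix_iff_getElem?, permWord, List.length_cons, List.length_nil,
    List.length_ofFn]
  refine exists_congr fun k ↦ ⟨?_, ?_⟩
  · rintro ⟨_, _, _, _⟩
    refine ⟨by omega, fun i hi ↦ ?_⟩
    interval_cases i <;> grind
  · rintro ⟨_, h⟩
    have := h 0
    have := h 1
    have := h 2
    grind

theorem Ecount_eq_card_arrangements_filter (n d j : ℕ) :
    Ecount n d j = #{w ∈ arrangements (Icc 1 n) |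
      descents w = d ∧ ([1, n, j] <:+: w ∨ [j, n, 1] <:+: w)} := by
  let e : Fin n ↪o ℕ := OrderEmbedding.ofStrictMono (fun i ↦ (i : ℕ) + 1)
    fun i k h ↦ Nat.succ_lt_succ h
  have he : univ.map e.toEmbedding = Icc 1 n := by
    ext x
    simp only [mem_map, mem_univ, true_and, mem_Icc]
    exact ⟨fun ⟨i, hi⟩ ↦ hi ▸ ⟨Nat.succ_pos i, i.isLt⟩,
      fun hx ↦ ⟨⟨x - 1, by omega⟩, Nat.sub_add_cancel hx.1⟩⟩
  rw [Ecount, ← he]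
  refine card_perm_eq_card_arrangements_filter e.toEmbedding fun π ↦ ?_
  rw [desNum_eq_descents_ofFn e, hasFactor_iff_infix, hasFactor_iff_infix]
  rfl

theorem Ecount_eq_add (n d j : ℕ) (hj : j ≠ 1) :
    Ecount n d j = #{w ∈ arrangements (Icc 1 n) | descents w = d ∧ [1, n, j] <:+: w} +
      #{w ∈ arrangements (Icc 1 n) | descents w = d ∧ [j, n, 1] <:+: w} := by
  rw [Ecount_eq_card_arrangements_filter, ← card_union_of_disjoint, ← filter_or]
  · simp only [and_or_left]
  · refine disjoint_filter.2 fun w hw ⟨_, x, t, hxt⟩ ⟨_, x', t', hxt'⟩ ↦ hj ?_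
    have h : (x ++ [1]) ++ [n] ++ (j :: t) = (x' ++ [j]) ++ [n] ++ (1 :: t') := by
      simpa using hxt.trans hxt'.symm
    have hnodup : ((x ++ [1]) ++ [n] ++ (j :: t)).Nodup := by
      simpa [← hxt] using (mem_arrangements.1 hw).1
    exact (List.cons.inj (eq_of_append_append_eq (List.cons_ne_nil n []) hnodup h).2).1

end Eulerian

section Convolution

theorem card_filter_product_add_eq {β γ : Type*} (X : Finset β) (V : Finset γ) (f : β → ℤ)
    (g : γ → ℕ) (d : ℤ) {N : ℕ} (hg : ∀ v ∈ V, g v < N) :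
    #{p ∈ X ×ˢ V | f p.1 + g p.2 = d} =
      ∑ k ∈ range N, #{x ∈ X | f x = d - k} * #{v ∈ V | g v = k} := by
  rw [card_eq_sum_card_fiberwise (f := fun p ↦ g p.2) (t := range N)]
  · refine sum_congr rfl fun k _ ↦ ?_
    rw [← card_product, ← filter_product, filter_filter]
    exact congr_arg card (filter_congr fun p _ ↦ by grind)
  · intro p hp
    exact mem_range.2 (hg p.2 (mem_product.1 (mem_filter.1 hp).1).2)

theorem card_filter_powerset_card_filter (S : Finset α) (p : α → Prop) [DecidablePred p]
    (u v : ℕ) :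
    #{T ∈ S.powerset | #{x ∈ T | p x} = u ∧ #{x ∈ T | ¬p x} = v} =
      (#{x ∈ S | p x}).choose u * (#{x ∈ S | ¬p x}).choose v := by
  classical
  rw [← card_powersetCard, ← card_powersetCard, ← card_product]
  have filter_pos {A B : Finset α} (hA : A ⊆ {x ∈ S | p x}) (hB : B ⊆ {x ∈ S | ¬p x}) :
      {x ∈ A ∪ B | p x} = A := by grind
  have filter_neg {A B : Finset α} (hA : A ⊆ {x ∈ S | p x}) (hB : B ⊆ {x ∈ S | ¬p x}) :
      {x ∈ A ∪ B | ¬p x} = B := by grind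
  refine card_nbij' (fun T ↦ ({x ∈ T | p x}, {x ∈ T | ¬p x})) (fun q ↦ q.1 ∪ q.2) ?_ ?_ ?_ ?_
  · intro T hT
    simp only [coe_filter, mem_powerset, Set.mem_ofPred_eq] at hT
    simp only [mem_coe, mem_product, mem_powersetCard]
    exact ⟨⟨filter_subset_filter p hT.1, hT.2.1⟩, ⟨filter_subset_filter _ hT.1, hT.2.2⟩⟩
  · rintro ⟨A, B⟩ hq
    simp only [mem_coe, mem_product, mem_powersetCard] at hq
    simp only [coe_filter, mem_powerset, Set.mem_ofPred_eq]
    rw [filter_pos hq.1.1 hq.2.1, filter_neg hq.1.1 hq.2.1]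
    exact ⟨by grind, hq.1.2, hq.2.2⟩
  · exact fun T _ ↦ filter_union_filter_not_eq p T
  · rintro ⟨A, B⟩ hq
    simp only [mem_coe, mem_product, mem_powersetCard] at hq
    exact Prod.ext (filter_pos hq.1.1 hq.2.1) (filter_neg hq.1.1 hq.2.1)

theorem zchoose_natCast (m k : ℕ) : zchoose m k = m.choose k := by
  simp [zchoose]

theorem zchoose_of_neg (a : ℤ) {b : ℤ} (hb : b < 0) : zchoose a b = 0 :=
  if_neg hb.not_ge

theorem card_filter_powerset_card_eq (S : Finset α) (p : α → Prop) [DecidablePred p] (u l : ℕ) :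
    (#{T ∈ S.powerset | #T = l ∧ #{x ∈ T | p x} = u} : ℤ) =
      (#{x ∈ S | p x}).choose u * zchoose #{x ∈ S | ¬p x} (l - u) := by
  have hcard (T : Finset α) := card_filter_add_card_filter_not (s := T) p
  obtain hul | hlu := le_or_gt u l
  · rw [← Nat.cast_sub hul, zchoose_natCast, ← Nat.cast_mul, ← card_filter_powerset_card_filter]
    exact congr_arg _ (congr_arg card (filter_congr fun T _ ↦ by grind))
  · rw [zchoose_of_neg _ (by omega), mul_zero, Nat.cast_eq_zero, card_eq_zero,
      filter_eq_empty_iff]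
    grind

theorem sum_powerset_card_card_filter (S : Finset α) (p : α → Prop) [DecidablePred p]
    (f : ℕ → ℕ → ℤ) :
    ∑ T ∈ S.powerset, f #T #{x ∈ T | p x} =
      ∑ l ∈ range (#S + 1), ∑ u ∈ range (#{x ∈ S | p x} + 1),
        (#{x ∈ S | p x}).choose u * zchoose #{x ∈ S | ¬p x} (l - u) * f l u := by
  rw [← sum_product', ← sum_fiberwise_of_maps_to (t := range (#S + 1) ×ˢ range (#{x ∈ S | p x} + 1))
    (g := fun T ↦ (#T, #{x ∈ T | p x}))]
  · refine sum_congr rfl fun q _ ↦ ?_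
    rw [← card_filter_powerset_card_eq, ← nsmul_eq_mul, ← sum_const]
    refine sum_congr (filter_congr fun T _ ↦ Prod.ext_iff) fun T hT ↦ ?_
    rw [(mem_filter.1 hT).2.1, (mem_filter.1 hT).2.2]
  · intro T hT
    rw [mem_powerset] at hT
    simp only [mem_product, mem_range, Nat.lt_succ_iff]
    exact ⟨card_le_card hT, card_le_card (filter_subset_filter p hT)⟩

end Convolution

section Factor

variable [LinearOrder α] {a b c : α}

theorem descents_append_min_max (hab : a < b) (hcb : c < b) {x : List α} (hx : ∀ y ∈ x, a < y)
    (t : List α) :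
    descents (x ++ [a, b, c] ++ t) =
      descents x + (if x = [] then 0 else 1) + 1 + descents (c :: t) := by
  rw [List.append_assoc, List.cons_append, descents_append_cons,
    descents_concat_of_forall_lt a x hx]
  simp only [List.cons_append, List.nil_append, descents_cons_cons, hab.not_gt, hcb, if_true,
    if_false]
  omega

theorem descents_append_max_min (hab : a < b) (hcb : c < b) (x : List α) {t : List α}
    (ht : ∀ y ∈ t, a < y) :
    descents (x ++ [c, b, a] ++ t) = descents (x ++ [c]) + 1 + descents t := by
  rw [List.append_assoc, List.cons_append, descents_append_cons, ← descents_cons_of_forall_lt ht]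
  simp only [List.cons_append, List.nil_append, descents_cons_cons, hab, hcb.not_gt, if_true,
    if_false]
  omega

variable {R : Finset α}

theorem card_splits_filter_descents (R : Finset α) (g : List α → ℕ) (d : ℕ) {N : ℕ}
    (hg : ∀ T ⊆ R, ∀ t ∈ arrangements T, g t < N) :
    #{p ∈ splits R | descents p.1 + 1 + g p.2 = d} =
      ∑ T ∈ R.powerset, ∑ k ∈ range N,
        eulerianOn (R \ T) (d - k - 1) * #{t ∈ arrangements T | g t = k} := by
  rw [card_filter_splits]
  refine sum_congr rfl fun T hT ↦ ?_
  have hconv := card_filter_product_add_eq (arrangements (R \ T)) (arrangements T)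
    (fun x ↦ (descents x : ℤ)) g (d - 1) (hg T (mem_powerset.1 hT))
  simp only [sub_right_comm (d : ℤ) 1] at hconv
  exact Eq.trans (congr_arg card (filter_congr fun p _ ↦ by omega)) hconv

theorem card_arrangements_filter_descents_reverse {T : Finset α} (hc : c ∉ T) (k : ℕ) :
    #{t ∈ arrangements T | descents (c :: t).reverse = k} = eulerianConsOn c T (#T - k) := by
  refine congr_arg card (filter_congr fun t ht ↦ ?_)
  have hlen := length_of_mem_arrangements ht
  rw [mem_arrangements] at ht
  have hrev := descents_reverse_add_descents c t (by grind)
  omega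

-- In `x ++ [a, b, c] ++ t` the step into the minimum `a` is a descent unless `x = []`. Counting
-- one there regardless is wrong only for the words with `x = []`, i.e. for arrangements of `R`.
theorem card_splits_filter_min_max_add (R : Finset α) (c : α) (d : ℕ) :
    #{p ∈ splits R | descents p.1 + (if p.1 = [] then 0 else 1) + 1 + descents (c :: p.2) = d} +
        eulerianConsOn c R (d - 2) =
      #{p ∈ splits R | descents p.1 + 1 + (descents (c :: p.2) + 1) = d} +
        eulerianConsOn c R (d - 1) := by
  have cons_count (i : ℕ) : eulerianConsOn c R (d - i) =
      #{p ∈ splits R | p.1 = [] ∧ descents (c :: p.2) + i = d} := by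
    rw [card_filter_splits_nil R fun t ↦ descents (c :: t) + i = d, eulerianConsOn]
    exact congr_arg card (filter_congr fun t _ ↦ by omega)
  rw [show (d - 2 : ℤ) = d - (2 : ℕ) from rfl, show (d - 1 : ℤ) = d - (1 : ℕ) from rfl,
    cons_count, cons_count]
  simp only [card_filter, ← sum_add_distrib]
  refine sum_congr rfl fun p _ ↦ ?_
  by_cases hp : p.1 = []
  · simp only [hp, descents_nil]
    grind
  · simp only [hp]
    grind

variable (hab : a < b) (hac : a < c) (hcb : c < b) (hc : c ∉ R) (hR : ∀ y ∈ R, a < y ∧ y < b)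
include hab hac hcb hc hR

theorem card_filter_infix_min_max (d : ℕ) :
    #{w ∈ arrangements (insert a (insert b (insert c R))) | descents w = d ∧ [a, b, c] <:+: w} =
      #{p ∈ splits R |
        descents p.1 + (if p.1 = [] then 0 else 1) + 1 + descents (c :: p.2) = d} := by
  have hf : [a, b, c] ∈ arrangements (insert a (insert b (insert c R)) \ R) := by
    simp only [mem_arrangements]
    grind
  rw [card_arrangements_filter_infix (by grind) (List.cons_ne_nil a _) hf]
  refine congr_arg card (filter_congr fun p hp ↦ ?_)
  rw [mem_splits, mem_arrangements] at hp
  rw [descents_append_min_max hab hcb (by grind)]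

theorem card_filter_infix_max_min (d : ℕ) :
    #{w ∈ arrangements (insert a (insert b (insert c R))) | descents w = d ∧ [c, b, a] <:+: w} =
      #{p ∈ splits R | descents p.1 + 1 + descents (c :: p.2).reverse = d} := by
  have hf : [c, b, a] ∈ arrangements (insert a (insert b (insert c R)) \ R) := by
    simp only [mem_arrangements]
    grind
  rw [card_arrangements_filter_infix (by grind) (List.cons_ne_nil c _) hf,
    card_filter_splits_swap_reverse R fun x t ↦ descents (x ++ [c, b, a] ++ t) = d]
  refine congr_arg card (filter_congr fun p hp ↦ ?_)
  rw [mem_splits, mem_arrangements] at hp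
  rw [descents_append_max_min hab hcb _ (by grind), List.reverse_cons]
  omega

theorem card_filter_infix_add_eq_sum_powerset (d : ℕ) {N : ℕ} (hN : #R + 1 < N) :
    (#{w ∈ arrangements (insert a (insert b (insert c R))) | descents w = d ∧ [a, b, c] <:+: w} +
      #{w ∈ arrangements (insert a (insert b (insert c R))) |
        descents w = d ∧ [c, b, a] <:+: w} : ℤ) =
      ∑ T ∈ R.powerset, ∑ k ∈ range N, (eulerianOn (R \ T) (d - k - 1) : ℤ) *
          (eulerianConsOn c T (#T - k) + eulerianConsOn c T (k - 1)) +
        eulerianConsOn c R (d - 1) - eulerianConsOn c R (d - 2) := by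
  have hbound : ∀ T ⊆ R, ∀ t ∈ arrangements T,
      descents (c :: t) + 1 < N ∧ descents (c :: t).reverse < N := by
    intro T hT t ht
    have hlen := length_of_mem_arrangements ht
    have hcard := card_le_card hT
    rw [mem_arrangements] at ht
    have hrev := descents_reverse_add_descents c t (by grind)
    omega
  have hcons (T : Finset α) (k : ℕ) :
      #{t ∈ arrangements T | descents (c :: t) + 1 = k} = eulerianConsOn c T (k - 1) :=
    congr_arg card (filter_congr fun t _ ↦ by omega)
  have hmin := card_splits_filter_min_max_add R c d
  rw [card_splits_filter_descents R (fun t ↦ descents (c :: t) + 1) d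
    fun T hT t ht ↦ (hbound T hT t ht).1] at hmin
  have hmax := card_splits_filter_descents R (fun t ↦ descents (c :: t).reverse) d
    fun T hT t ht ↦ (hbound T hT t ht).2
  rw [sum_congr rfl fun T hT ↦ sum_congr rfl fun k _ ↦ congr_arg (_ * ·)
    (card_arrangements_filter_descents_reverse (fun h ↦ hc (mem_powerset.1 hT h)) k)] at hmax
  rw [card_filter_infix_min_max hab hac hcb hc hR,
    card_filter_infix_max_min hab hac hcb hc hR, hmax]
  simp only [hcons] at hmin
  zify at hmin ⊢
  simp only [mul_add, sum_add_distrib]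
  linarith

theorem card_filter_infix_add_eq_sum_eulerian (d : ℕ) {N : ℕ} (hN : #R + 1 < N) :
    (#{w ∈ arrangements (insert a (insert b (insert c R))) | descents w = d ∧ [a, b, c] <:+: w} +
      #{w ∈ arrangements (insert a (insert b (insert c R))) |
        descents w = d ∧ [c, b, a] <:+: w} : ℤ) =
      ∑ l ∈ range (#R + 1), ∑ u ∈ range (#{y ∈ R | y < c} + 1),
          (#{y ∈ R | y < c}).choose u * zchoose #{y ∈ R | ¬y < c} (l - u) *
            ∑ k ∈ range N, (eulerian (#R - l) (d - k - 1) : ℤ) *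
              (eulerianFirst (l + 1) (l - k) (u + 1) + eulerianFirst (l + 1) (k - 1) (u + 1)) +
        eulerianFirst (#R + 1) (d - 1) (#{y ∈ R | y < c} + 1) -
        eulerianFirst (#R + 1) (d - 2) (#{y ∈ R | y < c} + 1) := by
  rw [card_filter_infix_add_eq_sum_powerset hab hac hcb hc hR d hN, eulerianFirst_card hc,
    eulerianFirst_card hc, ← sum_powerset_card_card_filter R (· < c) fun l u ↦
      ∑ k ∈ range N, (eulerian (#R - l) (d - k - 1) : ℤ) *
        (eulerianFirst (l + 1) (l - k) (u + 1) + eulerianFirst (l + 1) (k - 1) (u + 1))]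
  congr 2
  refine sum_congr rfl fun T hT ↦ sum_congr rfl fun k _ ↦ ?_
  rw [mem_powerset] at hT
  rw [eulerianFirst_card (fun h ↦ hc (hT h)), eulerianFirst_card (fun h ↦ hc (hT h)),
    ← eulerian_card, card_sdiff_of_subset hT, Nat.cast_sub (card_le_card hT)]

end Factor

end Words

/-- The recursion for `E(n,d,j)`; the sum over `k ≥ 0` has only finitely many nonzero
terms (all with `k ≤ d - 1 < n`), so it is taken over `k < n + 1`. -/
theorem Ecount_rec (n d j : ℕ) (hn : 3 ≤ n) (hj1 : 2 ≤ j) (hj2 : j ≤ n - 1)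
    (hd : d ≤ n - 1) :
    (Ecount n d j : ℤ) =
      (∑ l ∈ Finset.Icc 1 (n - 2), ∑ k ∈ Finset.range (n + 1), ∑ u ∈ Finset.range (j - 1),
        ((j - 2).choose u : ℤ) * zchoose ((n : ℤ) - j - 1) ((l : ℤ) - 1 - u) *
          (eulerian ((n : ℤ) - l - 2) ((d : ℤ) - k - 1) : ℤ) *
          ((eulerianFirst (l : ℤ) ((l : ℤ) - 1 - k) ((u : ℤ) + 1) : ℤ) +
            (eulerianFirst (l : ℤ) ((k : ℤ) - 1) ((u : ℤ) + 1) : ℤ))) +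
        (eulerianFirst ((n : ℤ) - 2) ((d : ℤ) - 1) ((j : ℤ) - 1) : ℤ) -
        (eulerianFirst ((n : ℤ) - 2) ((d : ℤ) - 2) ((j : ℤ) - 1) : ℤ) := by
  have hIcc : insert 1 (insert n (insert j ((Finset.Ioo 1 n).erase j))) = Finset.Icc 1 n := by
    grind
  have hbelow : ((Finset.Ioo 1 n).erase j).filter (· < j) = Finset.Ioo 1 j := by grind
  have habove : ((Finset.Ioo 1 n).erase j).filter (¬· < j) = Finset.Ioo j n := by grind
  have hcard : ((Finset.Ioo 1 n).erase j).card = n - 3 := by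
    rw [Finset.card_erase_of_mem (by grind), Nat.card_Ioo]
    omega
  have hn_cast : ((n - 3 : ℕ) : ℤ) + 1 = n - 2 := by omega
  have hj_cast : ((j - 1 - 1 : ℕ) : ℤ) + 1 = j - 1 := by omega
  have hnj_cast : ((n - j - 1 : ℕ) : ℤ) = n - j - 1 := by omega
  rw [Ecount_eq_add n d j (by omega), Nat.cast_add, ← hIcc,
    card_filter_infix_add_eq_sum_eulerian (by omega) (by omega) (by omega) (by simp)
      (by grind) d (show _ < n + 1 by omega), hbelow, habove, hcard, Nat.card_Ioo, Nat.card_Ioo,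
    hn_cast, hj_cast, hnj_cast, show j - 1 - 1 + 1 = j - 1 by omega]
  congr 2
  refine Finset.sum_nbij' (· + 1) (· - 1) (by grind) (by grind) (by simp) (by grind) fun l _ ↦ ?_
  rw [Finset.sum_comm, Nat.cast_succ, add_sub_cancel_right,
    show (n : ℤ) - (l + 1) - 2 = (n - 3 : ℕ) - l by omega, Nat.sub_sub j 1 1]
  simp only [Finset.mul_sum, mul_assoc]
end

section
/- For all integers n ≥ 3, 2 ≤ j ≤ n−1, and d ≥ 0, one has p_{n,d}(1,j) = Σ binom(j−2, m₁)·binom(n−j−1, m₂)·( (n−3−m₁−m₂)! / Π_{(m,e)} ( (m!)^{λ(m,e)} · λ(m,e)! ) )·( Π_{(m,e)} l(m,e)^{λ(m,e)} )·U(m₁+m₂+1, d₀−1, m₁+1), where the sum is over all triples of nonnegative integers m₁, m₂, d₀ with m₁+m₂ even and d₀ ≤ (m₁+m₂+2)/2, together with all finitely supported functions λ from pairs (m,e) of nonnegative integers with m odd to the nonnegative integers, subject to the constraints m₁ + m₂ + 3 + Σ_{(m,e)} m·λ(m,e) = n and d₀ + Σ_{(m,e)} e·λ(m,e) = d. -/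
open scoped Classical

/-- `U(n,d,j) := A(n, n-d-1, j) + A(n, d-1, j)`. -/
noncomputable def Ucount (n d j : ℤ) : ℕ :=
  eulerianFirst n (n - d - 1) j + eulerianFirst n (d - 1) j

/-- Cyclic descent number: the number of points `x` with `c x < x`. -/
def cdes {n : ℕ} (c : Equiv.Perm (Fin n)) : ℕ :=
  (Finset.univ.filter (fun x : Fin n => c x < x)).card

/-- Cyclic ascent number: the number of points `x` with `x < c x`. -/
def casc {n : ℕ} (c : Equiv.Perm (Fin n)) : ℕ :=
  (Finset.univ.filter (fun x : Fin n => x < c x)).card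

/-- `M(π) = Σ_c min(cdes c, casc c)` over all cycles `c` of `π`. -/
def Mstat {n : ℕ} (π : Equiv.Perm (Fin n)) : ℕ :=
  ∑ c ∈ π.cycleFactorsFinset, min (cdes c) (casc c)

/-- `π` has the three-letter word `a b c` (with `a ≠ c`) as a cyclic factor. -/
def HasCyclicFactor (n : ℕ) (π : Equiv.Perm (Fin n)) (a b c : ℕ) : Prop :=
  ∃ x y z : Fin n, (x : ℕ) + 1 = a ∧ (y : ℕ) + 1 = b ∧ (z : ℕ) + 1 = c ∧ π x = y ∧ π y = z

/-- `p_{n,d}(i,j)`: odd order permutations of length `n` with `M(π) = d` having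
`i n j` as a cyclic factor. -/
noncomputable def oddOrderCyclicCount (n d i j : ℕ) : ℕ :=
  Nat.card {π : Equiv.Perm (Fin n) //
    (∀ m ∈ π.cycleType, Odd m) ∧ Mstat π = d ∧ HasCyclicFactor n π i n j}

/-- `l(m,e)`: the number of cyclic permutations of `[m]` (single `m`-cycles) `c`
with `min(cdes c, casc c) = e`; in particular `l(1,0) = 1`. -/
noncomputable def cycleMinCount (m e : ℕ) : ℕ :=
  Nat.card {c : Equiv.Perm (Fin m) //
    c.IsCycleOn (Set.univ : Set (Fin m)) ∧ min (cdes c) (casc c) = e}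

/-!
A permutation containing the path `1 → n → j` amounts to three independent choices: the block `T` of
the cycle through the path, that cycle, and a permutation of the complement of `T`.

* `T` is given by its `m₁` elements between `1` and `j` and its `m₂` elements between `j` and `n`,
  hence the binomial coefficients.
* After an order-preserving relabelling of `T`, the cycle is `(0, N + 2, σ')` with `N = m₁ + m₂`,
  where `σ'` is a permutation `σ` of `[N + 1]`, with first letter `m₁ + 1`, shifted inside the
  interval between the two extremes. The cycle has two more cyclic descents than `σ` has descents.
  Its length is odd, so exactly one of `cdes` and `casc` is the minimum `d₀`, and the two cases are
  the two summands of `U(N + 1, d₀ - 1, m₁ + 1)`.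
* The permutations of an `N`-set with prescribed cycle profile `λ` are counted by the exponential
  formula. Splitting off the cycle through a fixed element gives a recursion over the support of
  `λ`, which the product formula satisfies because `∑ m λ(m, e) = N`.
-/

namespace OddOrderCyclic

open Equiv Equiv.Perm Finset

section Peeling

variable {α : Type*} [Fintype α] [DecidableEq α]

/-- The cycles with block `T`: permutations that permute `T` cyclically and fix everything outside
`T`. For `T = {a}` this is the identity, viewed as the trivial cycle at `a`. -/
noncomputable def cyclesOn (T : Finset α) : Finset (Perm α) :=
  {c | c.IsCycleOn (T : Set α) ∧ c.support ⊆ T}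

/-- The block of the cycle of `π` through `a`; it is `{a}` when `π` fixes `a`. -/
def cycleBlock (π : Perm α) (a : α) : Finset α :=
  insert a (π.cycleOf a).support

variable {S T : Finset α} {a : α} {c π τ : Perm α}

lemma mem_cyclesOn : c ∈ cyclesOn T ↔ c.IsCycleOn (T : Set α) ∧ c.support ⊆ T := by
  simp [cyclesOn]

lemma mem_permsOfFinset_iff : π ∈ permsOfFinset S ↔ π.support ⊆ S := by
  simp [mem_perms_of_finset_iff, subset_iff]

lemma eq_singleton_or_isCycle_of_mem_cyclesOn (hc : c ∈ cyclesOn T) (ha : a ∈ T) :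
    (T = {a} ∧ c = 1) ∨ (c.IsCycle ∧ c.support = T) := by
  obtain ⟨hcycle, hsupp⟩ := mem_cyclesOn.1 hc
  by_cases hT : (T : Set α).Nontrivial
  · exact .inr ⟨isCycle_iff_exists_isCycleOn.2
      ⟨T, hT, hcycle, fun x hx => hsupp (mem_support.2 hx)⟩,
      hsupp.antisymm fun x hx => mem_support.2 (hcycle.apply_ne hT hx)⟩
  · obtain rfl : T = {a} := by
      ext x
      rw [mem_singleton]
      exact ⟨fun hx => Set.not_nontrivial_iff.1 hT hx ha, fun hx => hx ▸ ha⟩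
    refine .inl ⟨rfl, support_eq_empty_iff.1 ?_⟩
    rcases subset_singleton_iff.1 hsupp with h | h
    · exact h
    · exact absurd (congrArg card h) (card_support_ne_one c)

lemma cycleOf_eq_of_mem_cyclesOn (hc : c ∈ cyclesOn T) (ha : a ∈ T) : c.cycleOf a = c := by
  rcases eq_singleton_or_isCycle_of_mem_cyclesOn hc ha with ⟨-, rfl⟩ | ⟨hcycle, rfl⟩
  · exact cycleOf_one a
  · exact hcycle.cycleOf_eq (mem_support.1 ha)

lemma insert_support_of_mem_cyclesOn (hc : c ∈ cyclesOn T) (ha : a ∈ T) :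
    insert a c.support = T := by
  rcases eq_singleton_or_isCycle_of_mem_cyclesOn hc ha with ⟨rfl, rfl⟩ | ⟨-, rfl⟩
  · simp
  · exact insert_eq_self.2 ha

lemma mem_cycleBlock (π : Perm α) (a : α) : a ∈ cycleBlock π a :=
  mem_insert_self _ _

lemma mem_cycleBlock_iff {x : α} : x ∈ cycleBlock π a ↔ π.SameCycle a x := by
  rw [cycleBlock, mem_insert, mem_support_cycleOf_iff, mem_support]
  refine ⟨?_, fun h => or_iff_not_imp_left.2 fun hx => ⟨h, fun ha => hx ?_⟩⟩
  · rintro (rfl | h)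
    exacts [SameCycle.refl _ _, h.1]
  · exact (h.eq_of_left ha).symm

lemma cycleBlock_subset (ha : a ∈ S) (hπ : π ∈ permsOfFinset S) : cycleBlock π a ⊆ S :=
  insert_subset ha ((support_cycleOf_le π a).trans (mem_permsOfFinset_iff.1 hπ))

lemma cycleOf_mem_cyclesOn_cycleBlock (π : Perm α) (a : α) :
    π.cycleOf a ∈ cyclesOn (cycleBlock π a) := by
  refine mem_cyclesOn.2 ⟨?_, subset_insert _ _⟩
  by_cases h : π a = a
  · simp [cycleBlock, (cycleOf_eq_one_iff π).2 h]
  · rw [cycleBlock, insert_eq_self.2 (by rwa [mem_support, cycleOf_apply_self]),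
      coe_support_eq_set_support]
    exact (isCycle_cycleOf π h).isCycleOn

lemma disjoint_mul_inv_cycleOf (π : Perm α) (a : α) :
    (π * (π.cycleOf a)⁻¹).Disjoint (π.cycleOf a) := by
  by_cases h : π a = a
  · simp [(cycleOf_eq_one_iff π).2 h]
  · exact disjoint_mul_inv_of_mem_cycleFactorsFinset
      (cycleOf_mem_cycleFactorsFinset_iff.2 (mem_support.2 h))

lemma mul_inv_cycleOf_mem_permsOfFinset (hπ : π ∈ permsOfFinset S) (a : α) :
    π * (π.cycleOf a)⁻¹ ∈ permsOfFinset (S \ cycleBlock π a) := by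
  rw [mem_permsOfFinset_iff] at hπ
  refine mem_permsOfFinset_iff.2 (subset_sdiff.2 ⟨fun x hx => ?_, ?_⟩)
  · rcases mem_union.1 (support_mul_le _ _ hx) with h | h
    · exact hπ h
    · exact hπ (support_cycleOf_le π a (by rwa [support_inv] at h))
  · have hdisj := (disjoint_mul_inv_cycleOf π a).disjoint_support
    refine disjoint_insert_right.2 ⟨?_, hdisj⟩
    by_cases h : π a = a
    · simp [(cycleOf_eq_one_iff π).2 h, h]
    · exact Finset.disjoint_right.1 hdisj (by rwa [mem_support, cycleOf_apply_self])

lemma disjoint_of_mem_permsOfFinset_sdiff (hc : c ∈ cyclesOn T)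
    (hτ : τ ∈ permsOfFinset (S \ T)) : τ.Disjoint c :=
  disjoint_iff_disjoint_support.2 <|
    disjoint_of_subset_left (mem_permsOfFinset_iff.1 hτ) <|
      disjoint_of_subset_right (mem_cyclesOn.1 hc).2 sdiff_disjoint

lemma cycleOf_mul_of_mem_cyclesOn (hc : c ∈ cyclesOn T) (hτ : τ ∈ permsOfFinset (S \ T))
    (ha : a ∈ T) : (τ * c).cycleOf a = c := by
  have hdisj := disjoint_of_mem_permsOfFinset_sdiff hc hτ
  have hτa : τ a = a := by
    by_contra h
    exact (mem_sdiff.1 (mem_permsOfFinset_iff.1 hτ (mem_support.2 h))).2 ha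
  rw [hdisj.commute.eq, cycleOf_mul_of_apply_right_eq_self hdisj.symm.commute _ hτa,
    cycleOf_eq_of_mem_cyclesOn hc ha]

theorem card_filter_cycleOf_eq_sum (ha : a ∈ S) (P : Finset α → Perm α → Perm α → Prop)
    [∀ T c τ, Decidable (P T c τ)] :
    #{π ∈ permsOfFinset S | P (cycleBlock π a) (π.cycleOf a) (π * (π.cycleOf a)⁻¹)} =
      ∑ T ∈ S.powerset with a ∈ T,
        #{x ∈ cyclesOn T ×ˢ permsOfFinset (S \ T) | P T x.1 x.2} := by
  rw [← card_sigma]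
  refine card_nbij' (fun π => ⟨cycleBlock π a, π.cycleOf a, π * (π.cycleOf a)⁻¹⟩)
    (fun x => x.2.2 * x.2.1) ?_ ?_ ?_ ?_
  · intro π hπ
    simp only [coe_filter, coe_sigma, Set.mem_ofPred_eq, Set.mem_sigma_iff, mem_powerset,
      mem_product] at hπ ⊢
    exact ⟨⟨cycleBlock_subset ha hπ.1, mem_cycleBlock π a⟩,
      ⟨cycleOf_mem_cyclesOn_cycleBlock π a, mul_inv_cycleOf_mem_permsOfFinset hπ.1 a⟩, hπ.2⟩
  · rintro ⟨T, c, τ⟩ hx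
    simp only [coe_filter, coe_sigma, Set.mem_ofPred_eq, Set.mem_sigma_iff, mem_powerset,
      mem_product] at hx ⊢
    obtain ⟨⟨hTS, haT⟩, ⟨hc, hτ⟩, hP⟩ := hx
    rw [mem_permsOfFinset_iff, cycleBlock, cycleOf_mul_of_mem_cyclesOn hc hτ haT,
      mul_inv_cancel_right, insert_support_of_mem_cyclesOn hc haT]
    exact ⟨(support_mul_le τ c).trans (union_subset
      ((mem_permsOfFinset_iff.1 hτ).trans sdiff_subset) ((mem_cyclesOn.1 hc).2.trans hTS)), hP⟩
  · intro π _
    exact inv_mul_cancel_right π _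
  · rintro ⟨T, c, τ⟩ hx
    simp only [coe_filter, coe_sigma, Set.mem_ofPred_eq, Set.mem_sigma_iff, mem_product] at hx
    obtain ⟨⟨-, haT⟩, ⟨hc, hτ⟩, -⟩ := hx
    simp only [cycleBlock, cycleOf_mul_of_mem_cyclesOn hc hτ haT, mul_inv_cancel_right,
      insert_support_of_mem_cyclesOn hc haT]

end Peeling

section Profile

variable {α ι : Type*} [Fintype α] [DecidableEq α] {S T : Finset α} {a : α} {c π τ : Perm α}

/-- The profile of a permutation `π` of `S`, for a statistic `s` on cycles: its value at `(m, e)` is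
the number of cycles of length `m` with statistic `e`. Each fixed point in `S` is a cycle of length
`1`, represented by the identity and hence with statistic `s 1`. -/
noncomputable def cycleProfile (s : Perm α → ι) (S : Finset α) (π : Perm α) : ℕ × ι →₀ ℕ :=
  ∑ c ∈ π.cycleFactorsFinset, Finsupp.single (#c.support, s c) 1 +
    Finsupp.single (1, s 1) #(S \ π.support)

lemma cycleProfile_mul (s : Perm α → ι) (hT : T ⊆ S) (ha : a ∈ T) (hc : c ∈ cyclesOn T)
    (hτ : τ ∈ permsOfFinset (S \ T)) :
    cycleProfile s S (τ * c) = Finsupp.single (#T, s c) 1 + cycleProfile s (S \ T) τ := by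
  rcases eq_singleton_or_isCycle_of_mem_cyclesOn hc ha with ⟨rfl, rfl⟩ | ⟨hcycle, rfl⟩
  · have hcard : #(S \ τ.support) = #((S \ {a}) \ τ.support) + 1 := by
      rw [sdiff_right_comm, sdiff_singleton_eq_erase, card_erase_add_one]
      exact mem_sdiff.2 ⟨singleton_subset_iff.1 hT, fun h => by
        simpa using mem_permsOfFinset_iff.1 hτ h⟩
    rw [mul_one, cycleProfile, hcard, Finsupp.single_add, cycleProfile, card_singleton]
    abel
  · have hdisj := disjoint_of_mem_permsOfFinset_sdiff hc hτ
    rw [cycleProfile, cycleProfile, hdisj.cycleFactorsFinset_mul_eq_union,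
      sum_union hdisj.disjoint_cycleFactorsFinset, hcycle.cycleFactorsFinset_eq_singleton,
      sum_singleton, hdisj.support_mul, union_comm, sdiff_sdiff_left, sup_eq_union]
    abel

lemma linearCombination_fst_cycleProfile (s : Perm α → ι) (hπ : π ∈ permsOfFinset S) :
    Finsupp.linearCombination ℕ Prod.fst (cycleProfile s S π) = #S := by
  have hsum : ∑ c ∈ π.cycleFactorsFinset, #c.support = #π.support := by
    rw [← sum_cycleType, cycleType_def]
    rfl
  rw [← card_sdiff_add_card_eq_card (mem_permsOfFinset_iff.1 hπ), add_comm #(S \ _)]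
  simp [cycleProfile, map_sum, hsum]

lemma mem_support_cycleProfile {s : Perm α → ι} {p : ℕ × ι} :
    p ∈ (cycleProfile s S π).support ↔
      (∃ c ∈ π.cycleFactorsFinset, (#c.support, s c) = p) ∨
        ((1, s 1) = p ∧ (S \ π.support).Nonempty) := by
  simp only [cycleProfile, Finsupp.mem_support_iff, Finsupp.coe_add, Finsupp.coe_finsetSum,
    Pi.add_apply, Finset.sum_apply, Finsupp.single_apply, sum_boole, Nat.cast_id, ne_eq,
    Nat.add_eq_zero_iff, card_eq_zero, filter_eq_empty_iff, ite_eq_right_iff,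
    sdiff_eq_empty_iff_subset, not_and, Classical.not_imp, nonempty_iff_ne_empty]
  grind

lemma forall_mem_support_cycleProfile_odd_iff (s : Perm α → ι) :
    (∀ p ∈ (cycleProfile s S π).support, Odd p.1) ↔ ∀ m ∈ π.cycleType, Odd m := by
  simp only [mem_support_cycleProfile, cycleType_def, Multiset.mem_map, mem_val,
    Function.comp_apply]
  constructor
  · rintro h _ ⟨c, hc, rfl⟩
    exact h _ (.inl ⟨c, hc, rfl⟩)
  · rintro h _ (⟨c, hc, rfl⟩ | ⟨rfl, -⟩)
    · exact h _ ⟨c, hc, rfl⟩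
    · exact odd_one

lemma mem_support_single_one_add {p q : ℕ × ι} {lam : ℕ × ι →₀ ℕ} :
    q ∈ (Finsupp.single p 1 + lam).support ↔ q = p ∨ q ∈ lam.support := by
  by_cases h : q = p
  · simp [h]
  · simp [h, Finsupp.single_eq_of_ne h]

/-- The exponential-formula weight `∏ (f (m, e) / m!) ^ λ(m, e) / λ(m, e)!` of a profile `λ`, where
`f (m, e)` is the number of cycles with statistic `e` on a block of size `m`. -/
noncomputable def profileWeight (f : ℕ × ι → ℕ) (lam : ℕ × ι →₀ ℕ) : ℚ :=
  lam.prod fun p k => ((f p : ℚ) / p.1.factorial) ^ k / k.factorial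

lemma apply_mul_profileWeight (f : ℕ × ι → ℕ) {lam : ℕ × ι →₀ ℕ} {p : ℕ × ι}
    (hp : p ∈ lam.support) :
    (lam p : ℚ) * profileWeight f lam =
      (f p : ℚ) / p.1.factorial * profileWeight f (lam - Finsupp.single p 1) := by
  have herase : (lam - Finsupp.single p 1).erase p = lam.erase p := by
    ext q
    by_cases h : q = p
    · simp [h]
    · simp [Finsupp.erase_ne h, Ne.symm h]
  obtain ⟨k, hk⟩ := Nat.exists_eq_succ_of_ne_zero (Finsupp.mem_support_iff.1 hp)
  rw [profileWeight, profileWeight, ← Finsupp.mul_prod_erase' lam p _ (by simp),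
    ← Finsupp.mul_prod_erase' (lam - Finsupp.single p 1) p _ (by simp), herase,
    Finsupp.tsub_apply, Finsupp.single_eq_same, hk, Nat.succ_sub_one, Nat.factorial_succ, pow_succ]
  push_cast
  field_simp

lemma single_add_eq_iff {p : ℕ × ι} {mu lam : ℕ × ι →₀ ℕ} (hp : p ∈ lam.support) :
    Finsupp.single p 1 + mu = lam ↔ mu = lam - Finsupp.single p 1 := by
  rw [eq_tsub_iff_add_eq_of_le, add_comm]
  simpa [Nat.one_le_iff_ne_zero] using hp

omit [Fintype α] in
lemma card_filter_mem_card_eq (ha : a ∈ S) {m : ℕ} (hm : m ≠ 0) :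
    #{T ∈ S.powerset | a ∈ T ∧ #T = m} = (#S - 1).choose (m - 1) := by
  have h := card_filter_powersetCard_subset {a} S m (singleton_subset_iff.2 ha)
    (by rw [card_singleton]; omega)
  rw [card_singleton] at h
  rw [← h]
  congr 1
  ext T
  simp only [mem_filter, mem_powerset, mem_powersetCard, singleton_subset_iff]
  tauto

lemma card_filter_single_add_cycleProfile_eq [DecidableEq ι] (s : Perm α → ι) (lam : ℕ × ι →₀ ℕ) :
    #{x ∈ cyclesOn T ×ˢ permsOfFinset (S \ T) |
        Finsupp.single (#T, s x.1) 1 + cycleProfile s (S \ T) x.2 = lam} =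
      ∑ p ∈ lam.support with p.1 = #T, #{c ∈ cyclesOn T | s c = p.2} *
        #{τ ∈ permsOfFinset (S \ T) | cycleProfile s (S \ T) τ = lam - Finsupp.single p 1} := by
  rw [card_eq_sum_card_fiberwise (f := fun x => (#T, s x.1))
    (t := {p ∈ lam.support | p.1 = #T})]
  · refine sum_congr rfl fun p hp => ?_
    obtain ⟨hp, hpT⟩ := mem_filter.1 hp
    rw [← card_product, ← filter_product, filter_filter]
    refine congrArg card (filter_congr fun x _ => ?_)
    rw [and_comm, Prod.ext_iff, and_iff_right hpT.symm]
    refine and_congr_right fun hx => ?_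
    rw [← single_add_eq_iff hp, show (#T, s x.1) = p from Prod.ext hpT.symm hx]
  · rintro ⟨c, τ⟩ hx
    have hlam := (mem_filter.1 hx).2
    simp [← hlam]

lemma cycleProfile_eq_single_add (s : Perm α → ι) (ha : a ∈ S) (hπ : π ∈ permsOfFinset S) :
    cycleProfile s S π = Finsupp.single (#(cycleBlock π a), s (π.cycleOf a)) 1 +
      cycleProfile s (S \ cycleBlock π a) (π * (π.cycleOf a)⁻¹) := by
  rw [← cycleProfile_mul s (cycleBlock_subset ha hπ) (mem_cycleBlock π a)
    (cycleOf_mem_cyclesOn_cycleBlock π a) (mul_inv_cycleOf_mem_permsOfFinset hπ a),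
    inv_mul_cancel_right]

lemma card_filter_cycleProfile_eq_sum [DecidableEq ι] (s : Perm α → ι) (ha : a ∈ S)
    (lam : ℕ × ι →₀ ℕ) :
    #{π ∈ permsOfFinset S | cycleProfile s S π = lam} =
      ∑ p ∈ lam.support, ∑ T ∈ S.powerset with a ∈ T ∧ #T = p.1, #{c ∈ cyclesOn T | s c = p.2} *
        #{τ ∈ permsOfFinset (S \ T) | cycleProfile s (S \ T) τ = lam - Finsupp.single p 1} := by
  rw [filter_congr fun π hπ => by rw [cycleProfile_eq_single_add s ha hπ],
    card_filter_cycleOf_eq_sum ha fun T c τ =>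
      Finsupp.single (#T, s c) 1 + cycleProfile s (S \ T) τ = lam]
  simp only [card_filter_single_add_cycleProfile_eq]
  refine sum_comm' fun T p => ?_
  simp only [mem_filter]
  tauto

lemma fst_le_linearCombination_fst {lam : ℕ × ι →₀ ℕ} {p : ℕ × ι} (hp : p ∈ lam.support) :
    p.1 ≤ Finsupp.linearCombination ℕ Prod.fst lam := by
  rw [Finsupp.linearCombination_apply, Finsupp.sum]
  calc p.1 ≤ lam p • p.1 := Nat.le_mul_of_pos_left _ (Nat.pos_of_ne_zero (by simpa using hp))
    _ ≤ _ := single_le_sum (f := fun p => lam p • p.1) (fun _ _ => Nat.zero_le _) hp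

lemma linearCombination_fst_tsub_single {lam : ℕ × ι →₀ ℕ} {p : ℕ × ι} (hp : p ∈ lam.support) :
    Finsupp.linearCombination ℕ Prod.fst (lam - Finsupp.single p 1) =
      Finsupp.linearCombination ℕ Prod.fst lam - p.1 := by
  conv_rhs => rw [← (single_add_eq_iff hp).2 rfl, map_add, Finsupp.linearCombination_single,
    one_smul, Nat.add_sub_cancel_left]

lemma choose_pred_mul_factorial_mul_factorial {N m : ℕ} (hm : m ≠ 0) (hmN : m ≤ N) :
    (N - 1).choose (m - 1) * (m.factorial * (N - m).factorial) = m * (N - 1).factorial := by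
  obtain ⟨k, rfl⟩ := Nat.exists_eq_succ_of_ne_zero hm
  rw [← Nat.choose_mul_factorial_mul_factorial (show k ≤ N - 1 by omega), Nat.factorial_succ,
    Nat.succ_sub_one, show N - 1 - k = N - k.succ by omega, Nat.succ_eq_add_one]
  ring

lemma sum_choose_mul_factorial_eq {lam : ℕ × ι →₀ ℕ} {N : ℕ} (hpos : ∀ p ∈ lam.support, p.1 ≠ 0)
    (hlam : Finsupp.linearCombination ℕ Prod.fst lam = N) (hN : N ≠ 0) :
    ∑ p ∈ lam.support,
      (N - 1).choose (p.1 - 1) * (p.1.factorial * (N - p.1).factorial) * lam p = N.factorial := by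
  calc _ = ∑ p ∈ lam.support, lam p • p.1 * (N - 1).factorial := sum_congr rfl fun p hp => by
        rw [choose_pred_mul_factorial_mul_factorial (hpos p hp)
          (hlam ▸ fst_le_linearCombination_fst hp), smul_eq_mul]
        ring
    _ = N.factorial := by
        rw [← sum_mul, ← Nat.mul_factorial_pred hN, ← hlam, Finsupp.linearCombination_apply,
          Finsupp.sum]

theorem card_filter_cycleProfile_eq [DecidableEq ι] (s : Perm α → ι) (f : ℕ × ι → ℕ)
    (hf : ∀ T e, #{c ∈ cyclesOn T | s c = e} = f (#T, e)) (S : Finset α) (lam : ℕ × ι →₀ ℕ)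
    (hpos : ∀ p ∈ lam.support, p.1 ≠ 0)
    (hlam : Finsupp.linearCombination ℕ Prod.fst lam = #S) :
    (#{π ∈ permsOfFinset S | cycleProfile s S π = lam} : ℚ) =
      (#S).factorial * profileWeight f lam := by
  induction hN : #S using Nat.strong_induction_on generalizing S lam with | _ N ih
  rw [hN] at hlam
  have hle : ∀ p ∈ lam.support, p.1 ≤ N := fun p hp => by
    rw [← hlam]
    exact fst_le_linearCombination_fst hp
  rcases S.eq_empty_or_nonempty with rfl | ⟨a, ha⟩
  · obtain rfl : N = 0 := hN.symm
    obtain rfl : lam = 0 := Finsupp.support_eq_empty.1 <|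
      eq_empty_of_forall_notMem fun p hp => hpos p hp (Nat.le_zero.1 (hle p hp))
    have hperms : permsOfFinset (∅ : Finset α) = {1} := by
      ext π
      simp [mem_permsOfFinset_iff]
    simp [hperms, filter_singleton, cycleProfile, profileWeight]
  have hterm : ∀ p ∈ lam.support, ∀ T ∈ {T ∈ S.powerset | a ∈ T ∧ #T = p.1},
      ((#{c ∈ cyclesOn T | s c = p.2} * #{τ ∈ permsOfFinset (S \ T) |
        cycleProfile s (S \ T) τ = lam - Finsupp.single p 1} : ℕ) : ℚ) =
      p.1.factorial * (N - p.1).factorial * (lam p * profileWeight f lam) := by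
    intro p hp T hT
    simp only [mem_filter, mem_powerset] at hT
    obtain ⟨hTS, -, hTp⟩ := hT
    have hcard : #(S \ T) = N - p.1 := by rw [card_sdiff_of_subset hTS, hN, hTp]
    have hp0 : 0 < p.1 := Nat.pos_of_ne_zero (hpos p hp)
    rw [Nat.cast_mul, hf, hTp, Prod.mk.eta,
      ih (N - p.1) (by have := hle p hp; omega) (S \ T) (lam - Finsupp.single p 1)
        (fun q hq => hpos q (Finsupp.support_tsub hq))
        (by rw [linearCombination_fst_tsub_single hp, hlam, hcard]) hcard,
      apply_mul_profileWeight f hp]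
    field_simp
  rw [card_filter_cycleProfile_eq_sum s ha lam, ← sum_choose_mul_factorial_eq hpos hlam
    (hN ▸ card_ne_zero_of_mem ha)]
  simp only [Nat.cast_sum]
  rw [sum_mul]
  refine sum_congr rfl fun p hp => ?_
  rw [sum_congr rfl (hterm p hp), sum_const, card_filter_mem_card_eq ha (hpos p hp), hN,
    nsmul_eq_mul]
  push_cast
  ring

end Profile

section Transport

variable {α β : Type*}

lemma isCycleOn_viaEmbedding (w : α ↪ β) {σ : Perm α} :
    (σ.viaEmbedding w).IsCycleOn (Set.range w) ↔ σ.IsCycleOn Set.univ := by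
  refine ⟨fun h => ⟨Set.bijOn_univ.2 σ.bijective, fun i _ j _ => ?_⟩, fun h => ?_⟩
  · exact (sameCycle_extendDomain (f := Equiv.ofInjective w w.injective)).1
      (h.2 (Set.mem_range_self i) (Set.mem_range_self j))
  · have hext := h.extendDomain (Equiv.ofInjective w w.injective)
    rwa [Set.image_univ] at hext

variable [Fintype α] [Fintype β]

lemma exists_viaEmbedding_eq [DecidableEq β] (w : α ↪ β) {c : Perm β}
    (hc : c.support ⊆ univ.map w) :
    ∃ σ : Perm α, σ.viaEmbedding w = c := by
  have hfix : ∀ x ∉ Set.range w, c x = x := fun x hx => by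
    by_contra h
    simpa using hx (by simpa using hc (mem_support.2 h))
  have hrange : ∀ x, c x ∈ Set.range w ↔ x ∈ Set.range w := fun x => by
    refine not_iff_not.1 ⟨fun h => ?_, fun h => by rwa [hfix x h]⟩
    rwa [c.injective (hfix _ h)] at h
  refine ⟨(Equiv.ofInjective w w.injective).permCongr.symm (c.subtypePerm hrange),
    Equiv.ext fun x => ?_⟩
  by_cases hx : x ∈ Set.range w
  · obtain ⟨y, rfl⟩ := hx
    simp [viaEmbedding_apply, permCongr_apply, Equiv.apply_ofInjective_symm]
  · rw [viaEmbedding_apply_of_notMem _ _ _ hx, hfix x hx]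

lemma support_viaEmbedding_subset [DecidableEq β] (w : α ↪ β) (σ : Perm α) :
    (σ.viaEmbedding w).support ⊆ univ.map w := fun x hx => by
  by_contra h
  exact mem_support.1 hx (viaEmbedding_apply_of_notMem _ _ _ (by simpa using h))

lemma cyclesOn_map_viaEmbedding [DecidableEq α] [DecidableEq β] (w : α ↪ β) :
    cyclesOn (univ.map w) =
      (cyclesOn univ).map ⟨viaEmbeddingHom w, viaEmbeddingHom_injective w⟩ := by
  ext c
  simp only [mem_cyclesOn, mem_map, subset_univ, and_true, coe_univ, coe_map,
    Set.image_univ]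
  constructor
  · rintro ⟨hc, hsupp⟩
    obtain ⟨σ, rfl⟩ := exists_viaEmbedding_eq w hsupp
    exact ⟨σ, (isCycleOn_viaEmbedding w).1 hc, rfl⟩
  · rintro ⟨σ, hσ, rfl⟩
    exact ⟨(isCycleOn_viaEmbedding w).2 hσ, support_viaEmbedding_subset w σ⟩

/-- The statistic `min (cdes c, casc c)` of a single cycle, whose sum over the cycles of a
permutation is `Mstat`. -/
def cycleMin {n : ℕ} (c : Perm (Fin n)) : ℕ :=
  min (cdes c) (casc c)

variable {m n : ℕ}

lemma cdes_add_casc (c : Perm (Fin n)) : cdes c + casc c = #c.support := by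
  rw [cdes, casc, ← card_union_of_disjoint (disjoint_filter.2 fun x _ h => h.asymm), ← filter_or]
  exact congrArg card (filter_congr fun x _ => lt_or_lt_iff_ne)

lemma card_filter_viaEmbedding (w : α ↪ β) (σ : Perm α) (r : β → β → Prop) (hr : ∀ x, ¬ r x x) :
    #{x | r x (σ.viaEmbedding w x)} = #{i | r (w i) (w (σ i))} := by
  rw [← card_map w]
  congr 1
  ext x
  simp only [mem_filter_univ, mem_map]
  constructor
  · intro hx
    by_cases hxw : x ∈ Set.range w
    · obtain ⟨i, rfl⟩ := hxw
      exact ⟨i, by rwa [viaEmbedding_apply] at hx, rfl⟩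
    · rw [viaEmbedding_apply_of_notMem _ _ _ hxw] at hx
      exact absurd hx (hr x)
  · rintro ⟨i, hi, rfl⟩
    rwa [viaEmbedding_apply]

lemma cycleMin_viaEmbedding (w : Fin m ↪o Fin n) (σ : Perm (Fin m)) :
    cycleMin (σ.viaEmbedding w.toEmbedding) = cycleMin σ := by
  have hdes := card_filter_viaEmbedding w.toEmbedding σ (fun x y => y < x) (fun x => lt_irrefl x)
  have hasc := card_filter_viaEmbedding w.toEmbedding σ (fun x y => x < y) (fun x => lt_irrefl x)
  simp only [RelEmbedding.coe_toEmbedding, w.lt_iff_lt] at hdes hasc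
  simp only [cycleMin, cdes, casc]
  convert congrArg₂ min hdes hasc

lemma card_filter_cycleMin_eq (T : Finset (Fin n)) (e : ℕ) :
    #{c ∈ cyclesOn T | cycleMin c = e} = cycleMinCount #T e := by
  let w := T.orderEmbOfFin rfl
  have hT : univ.map w.toEmbedding = T := T.map_orderEmbOfFin_univ rfl
  rw [← hT, cyclesOn_map_viaEmbedding, filter_map, card_map, card_map, card_fin, cycleMinCount,
    Nat.card_eq_fintype_card, Fintype.card_subtype]
  congr 1
  ext σ
  simp only [mem_filter, mem_cyclesOn, coe_univ, subset_univ, and_true, mem_univ, true_and,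
    Function.comp_apply, Function.Embedding.coeFn_mk, viaEmbeddingHom_apply,
    cycleMin_viaEmbedding]
  rw [cycleMin]

end Transport

section Words

variable {N : ℕ}

lemma conj_finRotate_mem_cyclesOn (w : Perm (Fin (N + 2))) :
    w * finRotate (N + 2) * w⁻¹ ∈ cyclesOn univ := by
  have hrot : (finRotate (N + 2)).IsCycleOn Set.univ := by
    have h := (isCycle_finRotate (n := N)).isCycleOn
    rwa [← coe_support_eq_set_support, support_finRotate, coe_univ] at h
  have hconj := hrot.conj (g := w)
  rw [Set.image_univ_of_surjective w.surjective] at hconj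
  exact mem_cyclesOn.2 ⟨by rwa [coe_univ], subset_univ _⟩

lemma isCycle_and_support_eq_univ {c : Perm (Fin (N + 2))} (hc : c ∈ cyclesOn univ) :
    c.IsCycle ∧ c.support = univ := by
  refine (eq_singleton_or_isCycle_of_mem_cyclesOn hc (mem_univ 0)).resolve_left fun h => ?_
  simpa using congrArg card h.1

lemma exists_conj_finRotate_eq {c : Perm (Fin (N + 2))} (hc : c ∈ cyclesOn univ) :
    ∃ w : Perm (Fin (N + 2)), w 0 = 0 ∧ w * finRotate (N + 2) * w⁻¹ = c := by
  obtain ⟨hcycle, hsupp⟩ := isCycle_and_support_eq_univ hc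
  obtain ⟨v, hv⟩ := isConj_iff.1 <| isCycle_finRotate.isConj hcycle <|
    congrArg card (support_finRotate.trans hsupp.symm)
  obtain ⟨k, hk⟩ : ∃ k : ℕ, (c ^ k) (v 0) = 0 :=
    hcycle.exists_pow_eq (mem_support.1 (hsupp ▸ mem_univ _)) (mem_support.1 (hsupp ▸ mem_univ _))
  refine ⟨c ^ k * v, hk, ?_⟩
  calc c ^ k * v * finRotate (N + 2) * (c ^ k * v)⁻¹
      = c ^ k * (v * finRotate (N + 2) * v⁻¹) * (c ^ k)⁻¹ := by group
    _ = c := by rw [hv, ← pow_succ, pow_succ', mul_inv_cancel_right]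

lemma conj_finRotate_apply (w : Perm (Fin (N + 2))) (i : Fin (N + 1)) :
    (w * finRotate (N + 2) * w⁻¹) (w i.castSucc) = w i.succ := by
  simp

lemma eq_of_conj_finRotate_eq {v w : Perm (Fin (N + 2))} (h0 : v 0 = w 0)
    (h : v * finRotate (N + 2) * v⁻¹ = w * finRotate (N + 2) * w⁻¹) : v = w := by
  refine Equiv.ext fun i => ?_
  induction i using Fin.induction with
  | zero => exact h0
  | succ i ih => rw [← conj_finRotate_apply, h, ih, conj_finRotate_apply]

lemma cdes_conj_finRotate (w : Perm (Fin (N + 2))) :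
    cdes (w * finRotate (N + 2) * w⁻¹) =
      #{i : Fin (N + 1) | w i.succ < w i.castSucc} +
        if w 0 < w (Fin.last (N + 1)) then 1 else 0 := by
  have hmap : cdes (w * finRotate (N + 2) * w⁻¹) = #{i | w (finRotate (N + 2) i) < w i} := by
    rw [← card_map w.toEmbedding, cdes]
    congr 1
    ext x
    obtain ⟨i, rfl⟩ := w.surjective x
    simp
  rw [hmap, card_filter, Fin.sum_univ_castSucc, card_filter]
  simp

lemma desNum_eq_card (σ : Perm (Fin (N + 1))) :
    desNum (N + 1) σ = #{k : Fin N | σ k.succ < σ k.castSucc} := by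
  rw [desNum, card_filter, card_filter, Nat.add_sub_cancel, sum_range]
  refine sum_congr rfl fun k _ => ?_
  have hsucc : permWord (N + 1) σ (k + 1) = σ k.succ + 1 := dif_pos (Nat.succ_lt_succ k.2)
  have hcast : permWord (N + 1) σ k = σ k.castSucc + 1 := dif_pos (Nat.lt_succ_of_lt k.2)
  simp [hsucc, hcast]

lemma eulerianFirst_eq_card (d : ℤ) (i : Fin (N + 1)) :
    eulerianFirst (N + 1) d (i + 1) =
      #{σ : Perm (Fin (N + 1)) | (desNum (N + 1) σ : ℤ) = d ∧ σ 0 = i} := by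
  have hN : ((N : ℤ) + 1).toNat = N + 1 := by omega
  have hfirst : ∀ σ : Perm (Fin (N + 1)), permWord (N + 1) σ 0 = σ 0 + 1 := fun σ =>
    dif_pos N.succ_pos
  rw [eulerianFirst, hN]
  split_ifs with h
  · rw [Nat.card_eq_fintype_card, Fintype.card_subtype]
    refine congrArg card (filter_congr fun σ _ => ?_)
    rw [hfirst, Fin.ext_iff]
    omega
  · refine (card_eq_zero.2 (filter_eq_empty_iff.2 fun σ _ hσ => h ?_)).symm
    omega

/-- The word `0, N + 2, σ' 0, …, σ' N` on `Fin (N + 3)`, where `σ'` is `σ` shifted up by one. -/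
noncomputable def boundedWord (σ : Perm (Fin (N + 1))) : Perm (Fin (N + 3)) :=
  Equiv.ofBijective (Fin.cons 0 (Fin.cons (Fin.last (N + 2)) fun k => (σ k).castSucc.succ)) <| by
    rw [← Finite.injective_iff_bijective, Fin.cons_injective_iff, Fin.cons_injective_iff]
    refine ⟨?_, ?_, ?_⟩
    · rintro ⟨i, hi⟩
      induction i using Fin.cases with
      | zero => exact Fin.last_pos.ne' hi
      | succ k => exact Fin.succ_ne_zero (σ k).castSucc hi
    · rintro ⟨k, hk⟩
      exact (Fin.castSucc_lt_last _).ne (Fin.succ_injective _ (hk.trans (Fin.succ_last _).symm))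
    · intro k l hkl
      simpa using hkl

lemma boundedWord_succ_succ (σ : Perm (Fin (N + 1))) (k : Fin (N + 1)) :
    boundedWord σ k.succ.succ = (σ k).castSucc.succ := rfl

lemma boundedWord_injective : Function.Injective (boundedWord (N := N)) := fun σ τ h =>
  Equiv.ext fun k => by
    have hk := congrArg (· k.succ.succ) h
    simpa [boundedWord_succ_succ] using hk

lemma exists_boundedWord_eq {w : Perm (Fin (N + 3))} (h0 : w 0 = 0)
    (h1 : w 1 = Fin.last (N + 2)) : ∃ σ : Perm (Fin (N + 1)), boundedWord σ = w := by
  have hmid : ∀ k : Fin (N + 1), ∃ y : Fin (N + 1), y.castSucc.succ = w k.succ.succ := fun k => by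
    have hne0 : w k.succ.succ ≠ 0 := fun h => by
      simpa using w.injective (h.trans h0.symm)
    have hne1 : w k.succ.succ ≠ Fin.last (N + 2) := fun h => by
      exact Fin.succ_ne_zero k (Fin.succ_injective _ (w.injective (h.trans h1.symm)))
    obtain ⟨x, hx⟩ := Fin.exists_succ_eq.2 hne0
    obtain ⟨y, rfl⟩ := Fin.exists_castSucc_eq.2 fun h : x = Fin.last (N + 1) => hne1 (by
      rw [← hx, h, Fin.succ_last])
    exact ⟨y, hx⟩
  choose σ hσ using hmid
  have hinj : Function.Injective σ := fun k l h => by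
    have hw : w k.succ.succ = w l.succ.succ := by rw [← hσ, ← hσ, h]
    exact Fin.succ_injective _ (Fin.succ_injective _ (w.injective hw))
  refine ⟨Equiv.ofBijective σ (Finite.injective_iff_bijective.1 hinj), Equiv.ext fun i => ?_⟩
  induction i using Fin.cases with
  | zero => exact h0.symm
  | succ i =>
    induction i using Fin.cases with
    | zero => exact h1.symm
    | succ k => exact hσ k

lemma cdes_boundedWord (σ : Perm (Fin (N + 1))) :
    cdes (boundedWord σ * finRotate (N + 3) * (boundedWord σ)⁻¹) = desNum (N + 1) σ + 2 := by
  rw [cdes_conj_finRotate, desNum_eq_card, card_filter, Fin.sum_univ_succ, Fin.sum_univ_succ,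
    card_filter]
  have h0 : ¬ boundedWord σ (Fin.succ 0) < boundedWord σ (Fin.castSucc 0) := Fin.not_lt_zero _
  have h1 : boundedWord σ (Fin.succ (Fin.succ 0)) < boundedWord σ (Fin.castSucc (Fin.succ 0)) :=
    Fin.succ_lt_succ_iff.2 (Fin.castSucc_lt_last _)
  have h2 : boundedWord σ 0 < boundedWord σ (Fin.last (N + 2)) := Fin.succ_pos _
  have hk : ∀ k : Fin N, boundedWord σ k.succ.succ.succ < boundedWord σ k.succ.succ.castSucc ↔
      σ k.succ < σ k.castSucc := fun k => by
    rw [← Fin.succ_castSucc, ← Fin.succ_castSucc]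
    simp only [boundedWord_succ_succ, Fin.succ_lt_succ_iff, Fin.castSucc_lt_castSucc_iff]
  rw [if_neg h0, if_pos h1, if_pos h2, zero_add, sum_congr rfl fun k _ => if_congr (hk k) rfl rfl]
  omega

/-- The cycles on `Fin (N + 3)` of the form `(0, N + 2, x, …)`. -/
noncomputable def boundedCycles (x : Fin (N + 3)) : Finset (Perm (Fin (N + 3))) :=
  {c ∈ cyclesOn univ | c 0 = Fin.last (N + 2) ∧ c (Fin.last (N + 2)) = x}

lemma mem_boundedCycles {x : Fin (N + 3)} {c : Perm (Fin (N + 3))} :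
    c ∈ boundedCycles x ↔
      c ∈ cyclesOn univ ∧ c 0 = Fin.last (N + 2) ∧ c (Fin.last (N + 2)) = x := by
  rw [boundedCycles, mem_filter]

lemma boundedWord_conj_finRotate_mem_boundedCycles {x : Fin (N + 3)} (σ : Perm (Fin (N + 1))) :
    boundedWord σ * finRotate (N + 3) * (boundedWord σ)⁻¹ ∈ boundedCycles x ↔
      (σ 0).castSucc.succ = x := by
  have h0 := conj_finRotate_apply (boundedWord σ) 0
  have h1 := conj_finRotate_apply (boundedWord σ) 1
  exact mem_boundedCycles.trans ⟨fun h => h1.symm.trans h.2.2,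
    fun h => ⟨conj_finRotate_mem_cyclesOn _, h0, h1.trans h⟩⟩

lemma exists_boundedWord_conj_finRotate_eq {x : Fin (N + 3)} {c : Perm (Fin (N + 3))}
    (hc : c ∈ boundedCycles x) :
    ∃ σ : Perm (Fin (N + 1)), boundedWord σ * finRotate (N + 3) * (boundedWord σ)⁻¹ = c := by
  obtain ⟨hcycle, h0, -⟩ := mem_boundedCycles.1 hc
  obtain ⟨w, hw0, rfl⟩ := exists_conj_finRotate_eq hcycle
  obtain ⟨σ, rfl⟩ := exists_boundedWord_eq hw0 (by
    rw [← h0, ← hw0]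
    exact (conj_finRotate_apply w 0).symm)
  exact ⟨σ, rfl⟩

lemma card_filter_cdes_eq_eulerianFirst (d : ℤ) (i : Fin (N + 1)) :
    #{c ∈ boundedCycles i.castSucc.succ | (cdes c : ℤ) = d + 2} =
      eulerianFirst (N + 1) d (i + 1) := by
  rw [eulerianFirst_eq_card]
  refine (card_nbij (fun σ => boundedWord σ * finRotate (N + 3) * (boundedWord σ)⁻¹)
    (fun σ hσ => ?_) (fun σ _ τ _ h => boundedWord_injective (eq_of_conj_finRotate_eq rfl h))
    fun c hc => ?_).symm
  · obtain ⟨hdes, hfirst⟩ := (mem_filter_univ _).1 hσ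
    refine mem_filter.2 ⟨(boundedWord_conj_finRotate_mem_boundedCycles σ).2 (by rw [hfirst]), ?_⟩
    rw [cdes_boundedWord]
    omega
  · obtain ⟨hc, hdes⟩ := mem_filter.1 hc
    obtain ⟨σ, rfl⟩ := exists_boundedWord_conj_finRotate_eq hc
    rw [cdes_boundedWord] at hdes
    exact ⟨σ, (mem_filter_univ _).2 ⟨by omega, Fin.castSucc_injective _ (Fin.succ_injective _
      ((boundedWord_conj_finRotate_mem_boundedCycles σ).1 hc))⟩, rfl⟩

lemma card_filter_cycleMin_boundedCycles {e : ℕ} (he : 2 * e < N + 3) (i : Fin (N + 1)) :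
    #{c ∈ boundedCycles i.castSucc.succ | cycleMin c = e} = Ucount (N + 1) (e - 1) (i + 1) := by
  have hcycleMin : ∀ c ∈ boundedCycles i.castSucc.succ, cycleMin c = e ↔
      (cdes c : ℤ) = N + 1 - (e - 1) - 1 + 2 ∨ (cdes c : ℤ) = e - 1 - 1 + 2 := fun c hc => by
    have hsum := cdes_add_casc c
    rw [(isCycle_and_support_eq_univ (mem_boundedCycles.1 hc).1).2, card_fin] at hsum
    rw [cycleMin]
    omega
  rw [filter_congr hcycleMin, filter_or, card_union_of_disjoint, Ucount,
    card_filter_cdes_eq_eulerianFirst, card_filter_cdes_eq_eulerianFirst]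
  exact disjoint_filter.2 fun c _ _ => by omega

end Words

section MarkedBlocks

variable {n : ℕ} {z J l : Fin n} {m₁ m₂ : ℕ} {T : Finset (Fin n)}

/-- The blocks containing `z`, `J` and `l` that have `m₁` further elements between `z` and `J` and
`m₂` between `J` and `l`. -/
def markedBlocks (z J l : Fin n) (m₁ m₂ : ℕ) : Finset (Finset (Fin n)) :=
  {T | (z ∈ T ∧ J ∈ T ∧ l ∈ T) ∧ #(T ∩ Ioo z J) = m₁ ∧ #(T ∩ Ioo J l) = m₂}

lemma mem_markedBlocks : T ∈ markedBlocks z J l m₁ m₂ ↔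
    (z ∈ T ∧ J ∈ T ∧ l ∈ T) ∧ #(T ∩ Ioo z J) = m₁ ∧ #(T ∩ Ioo J l) = m₂ := by
  rw [markedBlocks, mem_filter_univ]

lemma card_filter_lt_of_mem_markedBlocks (hz : IsBot z) (hzJ : z < J)
    (hT : T ∈ markedBlocks z J l m₁ m₂) : #{x ∈ T | x < J} = m₁ + 1 := by
  obtain ⟨⟨hzT, -, -⟩, hm₁, -⟩ := mem_markedBlocks.1 hT
  have hins : {x ∈ T | x < J} = insert z (T ∩ Ioo z J) := by
    ext x
    have := (hz x).lt_or_eq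
    simp only [mem_filter, mem_insert, mem_inter, mem_Ioo]
    grind
  rw [hins, card_insert_of_notMem (by simp), hm₁]

lemma card_of_mem_markedBlocks (hz : IsBot z) (hl : IsTop l) (hzJ : z < J) (hJl : J < l)
    (hT : T ∈ markedBlocks z J l m₁ m₂) : #T = m₁ + m₂ + 3 := by
  obtain ⟨⟨-, hJT, hlT⟩, -, hm₂⟩ := mem_markedBlocks.1 hT
  have hge : {x ∈ T | ¬ x < J} = insert J (insert l (T ∩ Ioo J l)) := by
    ext x
    have := (hl x).lt_or_eq
    simp only [mem_filter, mem_insert, mem_inter, mem_Ioo]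
    grind
  rw [← card_filter_add_card_filter_not (s := T) (· < J),
    card_filter_lt_of_mem_markedBlocks hz hzJ hT, hge, card_insert_of_notMem (by simp [hJl.ne]),
    card_insert_of_notMem (by simp), hm₂]
  omega

lemma insert_union_inter_Ioo (hzJ : z < J) (hJl : J < l) {A B : Finset (Fin n)}
    (hA : A ⊆ Ioo z J) (hB : B ⊆ Ioo J l) :
    insert z (insert J (insert l (A ∪ B))) ∩ Ioo z J = A ∧
      insert z (insert J (insert l (A ∪ B))) ∩ Ioo J l = B := by
  constructor <;> ext x <;> have hxA := @hA x <;> have hxB := @hB x <;>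
    simp only [mem_insert, mem_union, mem_inter, mem_Ioo] at hxA hxB ⊢ <;> grind

lemma card_markedBlocks (hz : IsBot z) (hl : IsTop l) (hzJ : z < J) (hJl : J < l) (m₁ m₂ : ℕ) :
    #(markedBlocks z J l m₁ m₂) = (#(Ioo z J)).choose m₁ * (#(Ioo J l)).choose m₂ := by
  rw [← card_powersetCard, ← card_powersetCard, ← card_product]
  refine card_nbij' (fun T => (T ∩ Ioo z J, T ∩ Ioo J l))
    (fun A => insert z (insert J (insert l (A.1 ∪ A.2)))) ?_ ?_ ?_ ?_
  · intro T hT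
    obtain ⟨-, h⟩ := mem_markedBlocks.1 hT
    simpa [mem_powersetCard, inter_subset_right] using h
  · rintro ⟨A, B⟩ hAB
    obtain ⟨⟨hA, rfl⟩, hB, rfl⟩ : (A ⊆ Ioo z J ∧ #A = m₁) ∧ B ⊆ Ioo J l ∧ #B = m₂ := by
      simpa [mem_powersetCard] using hAB
    have h := insert_union_inter_Ioo hzJ hJl hA hB
    exact mem_markedBlocks.2 ⟨by simp, by rw [h.1], by rw [h.2]⟩
  · intro T hT
    obtain ⟨⟨hzT, hJT, hlT⟩, -⟩ := mem_markedBlocks.1 hT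
    ext x
    have h₁ := (hz x).lt_or_eq
    have h₂ := (hl x).lt_or_eq
    have h₃ := lt_trichotomy x J
    simp only [mem_insert, mem_union, mem_inter, mem_Ioo]
    grind
  · rintro ⟨A, B⟩ hAB
    obtain ⟨⟨hA, -⟩, hB, -⟩ : (A ⊆ Ioo z J ∧ #A = m₁) ∧ B ⊆ Ioo J l ∧ #B = m₂ := by
      simpa [mem_powersetCard] using hAB
    exact Prod.ext_iff.2 (insert_union_inter_Ioo hzJ hJl hA hB)

lemma card_filter_cycleMin_viaEmbedding {N : ℕ} (w : Fin (N + 3) ↪o Fin n) (x : Fin (N + 3))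
    (e : ℕ) :
    #{c ∈ cyclesOn (univ.map w.toEmbedding) |
        (c (w 0) = w (Fin.last (N + 2)) ∧ c (w (Fin.last (N + 2))) = w x) ∧ cycleMin c = e} =
      #{c ∈ boundedCycles x | cycleMin c = e} := by
  rw [cyclesOn_map_viaEmbedding, filter_map, card_map, boundedCycles, filter_filter]
  refine congrArg card (filter_congr fun c _ => ?_)
  have happly (i : Fin (N + 3)) : c.viaEmbedding w.toEmbedding (w i) = w (c i) :=
    viaEmbedding_apply c w.toEmbedding i
  simp only [Function.comp_apply, Function.Embedding.coeFn_mk, viaEmbeddingHom_apply,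
    cycleMin_viaEmbedding, happly, w.injective.eq_iff]

lemma card_filter_map_lt {N : ℕ} (w : Fin N ↪o Fin n) (q : Fin N) :
    #{x ∈ univ.map w.toEmbedding | x < w q} = q := by
  rw [filter_map, card_map, ← Fin.card_Iio q]
  congr 1
  ext x
  simp

lemma card_filter_cycleMin_markedBlock (hz : IsBot z) (hl : IsTop l) (hzJ : z < J) (hJl : J < l)
    (hT : T ∈ markedBlocks z J l m₁ m₂) {e : ℕ} (he : 2 * e < m₁ + m₂ + 3) :
    #{c ∈ cyclesOn T | (c z = l ∧ c l = J) ∧ cycleMin c = e} =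
      Ucount (m₁ + m₂ + 1) (e - 1) (m₁ + 1) := by
  have hcard := card_of_mem_markedBlocks hz hl hzJ hJl hT
  let w := T.orderEmbOfFin hcard
  have hw : univ.map w.toEmbedding = T := T.map_orderEmbOfFin_univ hcard
  have hmem : ∀ x ∈ T, ∃ q, w q = x := fun x hx => by simpa [← hw] using hx
  obtain ⟨⟨hzT, hJT, hlT⟩, -⟩ := mem_markedBlocks.1 hT
  have hw0 : w 0 = z := by
    obtain ⟨q, rfl⟩ := hmem z hzT
    exact (hz _).antisymm' (w.monotone (Fin.zero_le q))
  have hwl : w (Fin.last (m₁ + m₂ + 2)) = l := by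
    obtain ⟨q, rfl⟩ := hmem l hlT
    exact (hl _).antisymm (w.monotone (Fin.le_last q))
  obtain ⟨q, rfl⟩ := hmem J hJT
  have hq : (q : ℕ) = m₁ + 1 := by
    rw [← card_filter_lt_of_mem_markedBlocks hz hzJ hT, ← hw, card_filter_map_lt]
  obtain ⟨i, hi, rfl⟩ : ∃ i : Fin (m₁ + m₂ + 1), (i : ℕ) = m₁ ∧ i.castSucc.succ = q :=
    ⟨⟨m₁, by omega⟩, rfl, Fin.ext hq.symm⟩
  have hcount := card_filter_cycleMin_viaEmbedding w i.castSucc.succ e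
  rw [card_filter_cycleMin_boundedCycles (by exact_mod_cast he), hi, hw, hw0, hwl] at hcount
  exact_mod_cast hcount

end MarkedBlocks

section Fibres

variable {n : ℕ} {z J l : Fin n} {m₁ m₂ d₀ d : ℕ} {lam : ℕ × ℕ →₀ ℕ} {T : Finset (Fin n)}
  {π : Perm (Fin n)}

lemma cycleOf_path_iff (π : Perm (Fin n)) (z J l : Fin n) :
    (π.cycleOf z z = l ∧ π.cycleOf z l = J) ↔ π z = l ∧ π l = J := by
  rw [cycleOf_apply_self]
  refine and_congr_right fun h => ?_
  rw [SameCycle.cycleOf_apply (h ▸ sameCycle_apply_right.2 (SameCycle.refl π z))]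

lemma linearCombination_snd_cycleProfile (S : Finset (Fin n)) (π : Perm (Fin n)) :
    Finsupp.linearCombination ℕ Prod.snd (cycleProfile cycleMin S π) = Mstat π := by
  have h1 : cycleMin (1 : Perm (Fin n)) = 0 := by simp [cycleMin, cdes]
  rw [cycleProfile, h1]
  simp [map_sum, Mstat, cycleMin]

/-- The permutations with `z ↦ l ↦ J` such that the cycle through `z` has `m₁` further elements
between `z` and `J`, `m₂` between `J` and `l` and statistic `d₀`, and the other cycles have
profile `λ`. -/
noncomputable def pathFibre (z J l : Fin n) (m₁ m₂ d₀ : ℕ) (lam : ℕ × ℕ →₀ ℕ) :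
    Finset (Perm (Fin n)) :=
  {π | cycleBlock π z ∈ markedBlocks z J l m₁ m₂ ∧
    ((π.cycleOf z z = l ∧ π.cycleOf z l = J) ∧ cycleMin (π.cycleOf z) = d₀) ∧
    cycleProfile cycleMin (univ \ cycleBlock π z) (π * (π.cycleOf z)⁻¹) = lam}

lemma permsOfFinset_univ : permsOfFinset (univ : Finset (Fin n)) = univ := by
  ext π
  simp [mem_permsOfFinset_iff]

lemma card_filter_cyclesOn_product_permsOfFinset (hz : IsBot z) (hl : IsTop l) (hzJ : z < J)
    (hJl : J < l) (hlen : m₁ + m₂ + 3 + Finsupp.linearCombination ℕ Prod.fst lam = n)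
    (hd₀ : 2 * d₀ < m₁ + m₂ + 3) (hpos : ∀ p ∈ lam.support, p.1 ≠ 0)
    (hT : T ∈ markedBlocks z J l m₁ m₂) :
    (#{x ∈ cyclesOn T ×ˢ permsOfFinset (univ \ T) |
        ((x.1 z = l ∧ x.1 l = J) ∧ cycleMin x.1 = d₀) ∧
          cycleProfile cycleMin (univ \ T) x.2 = lam} : ℚ) =
      Ucount (m₁ + m₂ + 1) (d₀ - 1) (m₁ + 1) *
        ((n - 3 - m₁ - m₂).factorial * profileWeight (fun p => cycleMinCount p.1 p.2) lam) := by
  have hcard : #(univ \ T) = n - 3 - m₁ - m₂ := by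
    rw [card_univ_sdiff, card_of_mem_markedBlocks hz hl hzJ hJl hT, Fintype.card_fin]
    omega
  rw [filter_product (fun c => (c z = l ∧ c l = J) ∧ cycleMin c = d₀)
      (fun τ => cycleProfile cycleMin (univ \ T) τ = lam), card_product, Nat.cast_mul,
    card_filter_cycleMin_markedBlock hz hl hzJ hJl hT hd₀,
    card_filter_cycleProfile_eq cycleMin (fun p => cycleMinCount p.1 p.2)
      card_filter_cycleMin_eq _ lam hpos (by omega), hcard]

theorem card_pathFibre (hz : IsBot z) (hl : IsTop l) (hzJ : z < J) (hJl : J < l)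
    (hlen : m₁ + m₂ + 3 + Finsupp.linearCombination ℕ Prod.fst lam = n)
    (hd₀ : 2 * d₀ < m₁ + m₂ + 3) (hpos : ∀ p ∈ lam.support, p.1 ≠ 0) :
    (#(pathFibre z J l m₁ m₂ d₀ lam) : ℚ) =
      (#(Ioo z J)).choose m₁ * (#(Ioo J l)).choose m₂ *
        ((n - 3 - m₁ - m₂).factorial * profileWeight (fun p => cycleMinCount p.1 p.2) lam) *
        Ucount (m₁ + m₂ + 1) (d₀ - 1) (m₁ + 1) := by
  have hpeel := card_filter_cycleOf_eq_sum (mem_univ z) fun T c τ =>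
    T ∈ markedBlocks z J l m₁ m₂ ∧ ((c z = l ∧ c l = J) ∧ cycleMin c = d₀) ∧
      cycleProfile cycleMin (univ \ T) τ = lam
  rw [permsOfFinset_univ, powerset_univ] at hpeel
  have hsum : #(pathFibre z J l m₁ m₂ d₀ lam) = ∑ T ∈ markedBlocks z J l m₁ m₂,
      #{x ∈ cyclesOn T ×ˢ permsOfFinset (univ \ T) |
        ((x.1 z = l ∧ x.1 l = J) ∧ cycleMin x.1 = d₀) ∧
          cycleProfile cycleMin (univ \ T) x.2 = lam} := by
    rw [pathFibre, hpeel, ← sum_subset (s₁ := markedBlocks z J l m₁ m₂)]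
    · exact sum_congr rfl fun T hT => by simp only [hT, true_and]
    · exact fun T hT => by simp [(mem_markedBlocks.1 hT).1.1]
    · exact fun T _ hT => by simp [hT]
  rw [hsum, Nat.cast_sum, sum_congr rfl fun T hT =>
      card_filter_cyclesOn_product_permsOfFinset hz hl hzJ hJl hlen hd₀ hpos hT,
    sum_const, card_markedBlocks hz hl hzJ hJl, nsmul_eq_mul]
  push_cast
  ring

lemma two_mul_cycleMin_le_card_support (c : Perm (Fin n)) : 2 * cycleMin c ≤ #c.support := by
  rw [cycleMin, ← cdes_add_casc]
  omega

lemma card_support_cycleOf_le_card_cycleBlock (π : Perm (Fin n)) (z : Fin n) :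
    #(π.cycleOf z).support ≤ #(cycleBlock π z) :=
  card_le_card (subset_insert _ _)

lemma mem_pathFibre_iff : π ∈ pathFibre z J l m₁ m₂ d₀ lam ↔
    (π z = l ∧ π l = J) ∧ #(cycleBlock π z ∩ Ioo z J) = m₁ ∧ #(cycleBlock π z ∩ Ioo J l) = m₂ ∧
      cycleMin (π.cycleOf z) = d₀ ∧
      cycleProfile cycleMin (univ \ cycleBlock π z) (π * (π.cycleOf z)⁻¹) = lam := by
  have hblock (h : π z = l ∧ π l = J) :
      z ∈ cycleBlock π z ∧ J ∈ cycleBlock π z ∧ l ∈ cycleBlock π z := by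
    obtain ⟨rfl, rfl⟩ := h
    simp [mem_cycleBlock_iff, SameCycle.refl]
  rw [pathFibre, mem_filter_univ, mem_markedBlocks, cycleOf_path_iff]
  tauto

lemma cycleProfile_of_mem_pathFibre (hz : IsBot z) (hl : IsTop l) (hzJ : z < J) (hJl : J < l)
    (hπ : π ∈ pathFibre z J l m₁ m₂ d₀ lam) :
    cycleProfile cycleMin univ π = Finsupp.single (m₁ + m₂ + 3, d₀) 1 + lam := by
  obtain ⟨hT, ⟨-, hd₀⟩, hlam⟩ := (mem_filter_univ _).1 hπ
  rw [cycleProfile_eq_single_add cycleMin (mem_univ z)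
      (mem_permsOfFinset_iff.2 (subset_univ _)),
    card_of_mem_markedBlocks hz hl hzJ hJl hT, hd₀, hlam]

/-- The constraints on the indices of the expansion: the cycle through the path has length
`m₁ + m₂ + 3` and statistic `d₀`, and `λ` is the profile of the other cycles. -/
def IsAdmissible (n d m₁ m₂ d₀ : ℕ) (lam : ℕ × ℕ →₀ ℕ) : Prop :=
  (∀ p ∈ lam.support, Odd p.1) ∧ Even (m₁ + m₂) ∧ d₀ ≤ (m₁ + m₂ + 2) / 2 ∧
    m₁ + m₂ + 3 + Finsupp.linearCombination ℕ Prod.fst lam = n ∧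
    d₀ + Finsupp.linearCombination ℕ Prod.snd lam = d

lemma forall_odd_and_Mstat_eq_iff (hz : IsBot z) (hl : IsTop l) (hzJ : z < J) (hJl : J < l)
    (hπ : π ∈ pathFibre z J l m₁ m₂ d₀ lam) :
    ((∀ m ∈ π.cycleType, Odd m) ∧ Mstat π = d) ↔ IsAdmissible n d m₁ m₂ d₀ lam := by
  have hprofile := cycleProfile_of_mem_pathFibre hz hl hzJ hJl hπ
  obtain ⟨hT, ⟨-, hmin⟩, -⟩ := (mem_filter_univ _).1 hπ
  have hlen : m₁ + m₂ + 3 + Finsupp.linearCombination ℕ Prod.fst lam = n := by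
    have := linearCombination_fst_cycleProfile cycleMin (S := univ) (π := π)
      (mem_permsOfFinset_iff.2 (subset_univ _))
    simpa [hprofile] using this
  have hstat : d₀ + Finsupp.linearCombination ℕ Prod.snd lam = Mstat π := by
    simpa [hprofile] using linearCombination_snd_cycleProfile univ π
  have hodd : (∀ m ∈ π.cycleType, Odd m) ↔
      Even (m₁ + m₂) ∧ ∀ p ∈ lam.support, Odd p.1 := by
    rw [← forall_mem_support_cycleProfile_odd_iff cycleMin (S := univ), hprofile]
    simp only [mem_support_single_one_add, forall_eq_or_imp]
    grind
  have hd₀ : 2 * d₀ ≤ m₁ + m₂ + 3 := by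
    rw [← card_of_mem_markedBlocks hz hl hzJ hJl hT, ← hmin]
    exact (two_mul_cycleMin_le_card_support _).trans (card_support_cycleOf_le_card_cycleBlock π z)
  rw [hodd, IsAdmissible, ← hstat]
  constructor
  · rintro ⟨⟨heven, hlam⟩, hd⟩
    refine ⟨hlam, heven, ?_, hlen, hd⟩
    obtain ⟨k, hk⟩ := heven
    omega
  · rintro ⟨hlam, heven, -, -, hd⟩
    exact ⟨⟨heven, hlam⟩, hd⟩

lemma card_eq_finsum_card_fiber {α β R : Type*} [AddCommMonoidWithOne R] [DecidableEq β]
    (s : Finset α) (f : α → β) : (#s : R) = ∑ᶠ b, (#{a ∈ s | f a = b} : R) := by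
  rw [finsum_eq_sum_of_support_subset (s := s.image f), ← Nat.cast_sum,
    ← card_eq_sum_card_image]
  intro b hb
  simp only [coe_image, Set.mem_image, mem_coe]
  by_contra! h
  exact hb (by simp [filter_eq_empty_iff.2 h])

theorem card_filter_path_eq_finsum (hz : IsBot z) (hl : IsTop l) (hzJ : z < J) (hJl : J < l)
    (d : ℕ) :
    (#{π : Perm (Fin n) |
        ((∀ m ∈ π.cycleType, Odd m) ∧ Mstat π = d) ∧ π z = l ∧ π l = J} : ℚ) =
      ∑ᶠ (m₁ : ℕ) (m₂ : ℕ) (d₀ : ℕ) (lam : ℕ × ℕ →₀ ℕ),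
        if IsAdmissible n d m₁ m₂ d₀ lam then (#(pathFibre z J l m₁ m₂ d₀ lam) : ℚ) else 0 := by
  rw [card_eq_finsum_card_fiber _ fun π => #(cycleBlock π z ∩ Ioo z J)]
  refine finsum_congr fun m₁ => ?_
  rw [card_eq_finsum_card_fiber _ fun π => #(cycleBlock π z ∩ Ioo J l)]
  refine finsum_congr fun m₂ => ?_
  rw [card_eq_finsum_card_fiber _ fun π => cycleMin (π.cycleOf z)]
  refine finsum_congr fun d₀ => ?_
  rw [card_eq_finsum_card_fiber _ fun π =>
    cycleProfile cycleMin (univ \ cycleBlock π z) (π * (π.cycleOf z)⁻¹)]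
  refine finsum_congr fun lam => ?_
  simp only [filter_filter]
  have hfibre (π : Perm (Fin n)) (hπ : π ∈ pathFibre z J l m₁ m₂ d₀ lam) :=
    forall_odd_and_Mstat_eq_iff (d := d) hz hl hzJ hJl hπ
  simp only [mem_pathFibre_iff] at hfibre
  split_ifs with h
  · congr 2
    ext π
    rw [mem_filter_univ, mem_pathFibre_iff]
    grind
  · rw [Nat.cast_eq_zero, card_eq_zero, filter_eq_empty_iff]
    grind

end Fibres

section Specialization

variable {n j : ℕ} {z J l : Fin n}

lemma hasCyclicFactor_iff (hz : (z : ℕ) = 0) (hJ : (J : ℕ) + 1 = j) (hl : (l : ℕ) + 1 = n)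
    (π : Perm (Fin n)) : HasCyclicFactor n π 1 n j ↔ π z = l ∧ π l = J := by
  constructor
  · rintro ⟨x, y, w, hx, hy, hw, hxy, hyw⟩
    obtain rfl : x = z := Fin.ext (by omega)
    obtain rfl : y = l := Fin.ext (by omega)
    obtain rfl : w = J := Fin.ext (by omega)
    exact ⟨hxy, hyw⟩
  · rintro ⟨hzl, hlJ⟩
    exact ⟨z, l, J, by omega, hl, hJ, hzl, hlJ⟩

lemma oddOrderCyclicCount_eq_card (hz : (z : ℕ) = 0) (hJ : (J : ℕ) + 1 = j)
    (hl : (l : ℕ) + 1 = n) (d : ℕ) :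
    oddOrderCyclicCount n d 1 j =
      #{π : Perm (Fin n) | ((∀ m ∈ π.cycleType, Odd m) ∧ Mstat π = d) ∧ π z = l ∧ π l = J} := by
  rw [oddOrderCyclicCount, Nat.card_eq_fintype_card, Fintype.card_subtype]
  refine congrArg card (filter_congr fun π _ => ?_)
  rw [hasCyclicFactor_iff hz hJ hl, and_assoc]

lemma sum_support_mul_eq_linearCombination {ι : Type*} (g : ι → ℕ) (lam : ι →₀ ℕ) :
    ∑ p ∈ lam.support, g p * lam p = Finsupp.linearCombination ℕ g lam := by
  simp only [Finsupp.linearCombination_apply, Finsupp.sum, smul_eq_mul, mul_comm]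

lemma profileWeight_eq_div {ι : Type*} (f : ℕ × ι → ℕ) (lam : ℕ × ι →₀ ℕ) :
    profileWeight f lam = (∏ p ∈ lam.support, (f p : ℚ) ^ lam p) /
      ∏ p ∈ lam.support, ((p.1.factorial : ℚ) ^ lam p * (lam p).factorial) := by
  rw [profileWeight, Finsupp.prod, ← prod_div_distrib]
  exact prod_congr rfl fun p _ => by rw [div_pow, div_div]

end Specialization

end OddOrderCyclic

open OddOrderCyclic

/-- The expansion of `p_{n,d}(1,j)` over cycle-type data: the sum ranges over
`m₁, m₂, d₀ ≥ 0` with `m₁+m₂` even and `d₀ ≤ (m₁+m₂+2)/2`, and over finitely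
supported functions `λ` on pairs `(m,e)` with `m` odd, subject to
`m₁+m₂+3+Σ m·λ(m,e) = n` and `d₀+Σ e·λ(m,e) = d`. -/
theorem oddOrderCyclicCount_eq (n d j : ℕ) (hn : 3 ≤ n) (hj1 : 2 ≤ j) (hj2 : j ≤ n - 1) :
    (oddOrderCyclicCount n d 1 j : ℚ) =
      ∑ᶠ (m₁ : ℕ) (m₂ : ℕ) (d₀ : ℕ) (lam : ℕ × ℕ →₀ ℕ),
        if (∀ p ∈ lam.support, Odd p.1) ∧ Even (m₁ + m₂) ∧ d₀ ≤ (m₁ + m₂ + 2) / 2 ∧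
            m₁ + m₂ + 3 + (∑ p ∈ lam.support, p.1 * lam p) = n ∧
            d₀ + (∑ p ∈ lam.support, p.2 * lam p) = d then
          ((j - 2).choose m₁ : ℚ) * ((n - j - 1).choose m₂ : ℚ) *
            (((n - 3 - m₁ - m₂).factorial : ℚ) /
              ∏ p ∈ lam.support, ((p.1.factorial : ℚ) ^ lam p * ((lam p).factorial : ℚ))) *
            (∏ p ∈ lam.support, (cycleMinCount p.1 p.2 : ℚ) ^ lam p) *
            (Ucount ((m₁ : ℤ) + m₂ + 1) ((d₀ : ℤ) - 1) ((m₁ : ℤ) + 1) : ℚ)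
        else 0 := by
  let z : Fin n := ⟨0, by omega⟩
  let J : Fin n := ⟨j - 1, by omega⟩
  let l : Fin n := ⟨n - 1, by omega⟩
  have hz : IsBot z := fun x => Nat.zero_le x
  have hl : IsTop l := fun x => Nat.le_sub_one_of_lt x.isLt
  have hzJ : z < J := Fin.mk_lt_mk.2 (by omega)
  have hJl : J < l := Fin.mk_lt_mk.2 (by omega)
  rw [oddOrderCyclicCount_eq_card (z := z) (J := J) (l := l) rfl (Nat.sub_add_cancel (by omega))
    (Nat.sub_add_cancel (by omega)) d, card_filter_path_eq_finsum hz hl hzJ hJl]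
  refine finsum_congr fun m₁ => finsum_congr fun m₂ => finsum_congr fun d₀ =>
    finsum_congr fun lam => ?_
  simp only [sum_support_mul_eq_linearCombination]
  refine if_ctx_congr Iff.rfl (fun h => ?_) fun _ => rfl
  obtain ⟨hodd, -, hd₀, hlen, -⟩ := h
  have hIooJ : (Finset.Ioo z J).card = j - 2 := by simp only [Fin.card_Ioo, z, J]; omega
  have hIool : (Finset.Ioo J l).card = n - j - 1 := by simp only [Fin.card_Ioo, J, l]; omega
  rw [card_pathFibre hz hl hzJ hJl hlen (by omega) fun p hp => (hodd p hp).pos.ne', hIooJ, hIool,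
    profileWeight_eq_div]
  ring
end

section
/- For every odd integer n ≥ 3, every integer j with 2 ≤ j ≤ n−1, and every integer d with 0 ≤ d ≤ (n−1)/2, the number of cyclic permutations of [n] (single n-cycles) c with min(cdes(c), casc(c)) = d having '1 n j' as a cyclic factor equals A(n−2, d−2, j−1) + A(n−2, n−d−2, j−1). -/
/-!
Reading a cycle `c` from the letter `1` turns `c = (1 n π₁+1 ⋯ πₙ₋₂+1)` into a permutation `π` of
`[n-2]`, and `c` has factor `1 n j` exactly when `π` starts with `j-1`. Around the cycle there are
two descents beyond those of `π`: from `n` to the next letter, and back to `1`. Since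
`cdes c + casc c = n`, the minimum equals `d < n/2` iff `cdes c` is one of the distinct numbers
`d` and `n-d`, giving the two summands.
-/

section Words

variable {m : ℕ}

lemma permWord_val {n : ℕ} (π : Equiv.Perm (Fin n)) (i : Fin n) : permWord n π i = π i + 1 :=
  dif_pos i.isLt

lemma desNum_succ_eq_card (π : Equiv.Perm (Fin (m + 1))) :
    desNum (m + 1) π =
      (Finset.univ.filter fun i : Fin m => π i.succ < π i.castSucc).card := by
  unfold desNum
  rw [Finset.card_filter, Finset.card_filter, Nat.add_sub_cancel, Finset.sum_range]
  refine Finset.sum_congr rfl fun i _ => ?_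
  have hsucc := permWord_val π i.succ
  have hcast := permWord_val π i.castSucc
  rw [Fin.val_succ] at hsucc
  rw [Fin.val_castSucc] at hcast
  simp only [hsucc, hcast, add_lt_add_iff_right, Fin.val_fin_lt]

lemma eulerianFirst_natCast_succ (m : ℕ) (d j : ℤ) :
    eulerianFirst ((m + 1 : ℕ) : ℤ) d j =
      {π : Equiv.Perm (Fin (m + 1)) |
        (desNum (m + 1) π : ℤ) = d ∧ ((π 0 : ℕ) : ℤ) + 1 = j}.ncard := by
  have hfirst (π : Equiv.Perm (Fin (m + 1))) : permWord (m + 1) π 0 = π 0 + 1 :=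
    permWord_val π 0
  unfold eulerianFirst
  split_ifs with h
  · simp only [Int.toNat_natCast, hfirst]
    rw [← Set.coe_ofPred, Nat.card_coe_set_eq]
    congr! 4 <;> omega
  · symm
    rw [Set.ncard_eq_zero, Set.eq_empty_iff_forall_notMem]
    rintro π ⟨hd, hj⟩
    omega

/-- The letter `a` followed by the word of `π`, relabelled increasingly to avoid `a`. -/
def prependLetter (a : Fin (m + 1)) (π : Equiv.Perm (Fin m)) : Equiv.Perm (Fin (m + 1)) :=
  a.cycleRange⁻¹ * Equiv.Perm.decomposeFin.symm (0, π)

@[simp]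
lemma prependLetter_zero (a : Fin (m + 1)) (π : Equiv.Perm (Fin m)) : prependLetter a π 0 = a := by
  simp [prependLetter, Equiv.Perm.inv_def]

@[simp]
lemma prependLetter_succ (a : Fin (m + 1)) (π : Equiv.Perm (Fin m)) (i : Fin m) :
    prependLetter a π i.succ = a.succAbove (π i) := by
  simp [prependLetter, Equiv.Perm.inv_def]

lemma prependLetter_injective (a : Fin (m + 1)) : Function.Injective (prependLetter a) :=
  (mul_right_injective _).comp
    (Equiv.Perm.decomposeFin.symm.injective.comp (Prod.mk_right_injective 0))

lemma range_prependLetter (a : Fin (m + 1)) : Set.range (prependLetter a) = {σ | σ 0 = a} := by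
  refine Set.Subset.antisymm (Set.range_subset_iff.2 (prependLetter_zero a)) fun σ hσ => ?_
  obtain ⟨⟨p, π⟩, hπ⟩ := Equiv.Perm.decomposeFin.symm.surjective (a.cycleRange * σ)
  have hp : p = 0 := by
    rw [← Equiv.Perm.decomposeFin_symm_apply_zero p π, hπ, Equiv.Perm.mul_apply, hσ,
      Fin.cycleRange_self]
  exact ⟨π, by rw [prependLetter, ← hp, hπ, inv_mul_cancel_left]⟩

lemma desNum_prependLetter (a : Fin (m + 2)) (π : Equiv.Perm (Fin (m + 1))) :
    desNum (m + 2) (prependLetter a π) =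
      (if (π 0).castSucc < a then 1 else 0) + desNum (m + 1) π := by
  rw [desNum_succ_eq_card, desNum_succ_eq_card, Fin.card_filter_univ_succ']
  simp only [Fin.castSucc_zero, prependLetter_zero, prependLetter_succ, ← Fin.succ_castSucc,
    Fin.succAbove_lt_succAbove_iff, Fin.succAbove_lt_iff_castSucc_lt]

end Words

lemma isCycleOn_univ_iff {α : Type*} [Fintype α] [DecidableEq α] [Nontrivial α]
    {f : Equiv.Perm α} :
    f.IsCycleOn (Set.univ : Set α) ↔ f.IsCycle ∧ f.support = Finset.univ := by
  constructor
  · intro hf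
    have hmove (x : α) : f x ≠ x := hf.apply_ne Set.nontrivial_univ (Set.mem_univ x)
    exact ⟨Equiv.Perm.isCycle_iff_exists_isCycleOn.2
      ⟨Set.univ, Set.nontrivial_univ, hf, fun x _ => Set.mem_univ x⟩,
      Finset.eq_univ_of_forall fun x => Equiv.Perm.mem_support.2 (hmove x)⟩
  · rintro ⟨hf, hsupp⟩
    have h := hf.isCycleOn
    rwa [← Equiv.Perm.coe_support_eq_set_support, hsupp, Finset.coe_univ] at h

section Cycles

variable {m : ℕ}

/-- The cycle `(σ₁ σ₂ ⋯ σₙ)` read off the word of `σ`, obtained by conjugating the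
rotation `i ↦ i + 1` of positions by `σ`. -/
def wordCycle {n : ℕ} (σ : Equiv.Perm (Fin n)) : Equiv.Perm (Fin n) :=
  σ * finRotate n * σ⁻¹

lemma wordCycle_apply {n : ℕ} (σ : Equiv.Perm (Fin n)) (i : Fin n) :
    wordCycle σ (σ i) = σ (finRotate n i) := by
  simp [wordCycle]

lemma wordCycle_apply_castSucc (σ : Equiv.Perm (Fin (m + 1))) (i : Fin m) :
    wordCycle σ (σ i.castSucc) = σ i.succ := by
  rw [wordCycle_apply, finRotate_apply, Fin.coeSucc_eq_succ]

lemma wordCycle_apply_last (σ : Equiv.Perm (Fin (m + 1))) :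
    wordCycle σ (σ (Fin.last m)) = σ 0 := by
  rw [wordCycle_apply, finRotate_last]

lemma wordCycle_prependLetter_zero (a : Fin (m + 2)) (π : Equiv.Perm (Fin (m + 1))) :
    wordCycle (prependLetter a π) a = a.succAbove (π 0) := by
  have h := wordCycle_apply_castSucc (prependLetter a π) 0
  rwa [Fin.castSucc_zero, prependLetter_zero, prependLetter_succ] at h

lemma wordCycle_injOn (a : Fin (m + 1)) : Set.InjOn wordCycle {σ | σ 0 = a} := by
  intro σ hσ τ hτ h
  ext1 i
  induction i using Fin.induction with
  | zero => exact hσ.trans hτ.symm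
  | succ i ih => rw [← wordCycle_apply_castSucc, ← wordCycle_apply_castSucc, h, ih]

lemma image_wordCycle (a : Fin (m + 2)) :
    wordCycle '' {σ | σ 0 = a} = {c | c.IsCycleOn (Set.univ : Set (Fin (m + 2)))} := by
  have hrot : (finRotate (m + 2)).IsCycleOn (Set.univ : Set (Fin (m + 2))) :=
    isCycleOn_univ_iff.2 ⟨isCycle_finRotate, support_finRotate⟩
  refine Set.Subset.antisymm ?_ fun c hc => ?_
  · rintro _ ⟨σ, -, rfl⟩
    have h := hrot.conj (g := σ)
    rwa [Set.image_univ_of_surjective σ.surjective] at h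
  · obtain ⟨hcycle, hsupp⟩ := isCycleOn_univ_iff.1 hc
    obtain ⟨τ, hτ⟩ := isConj_iff.1 <|
      isCycle_finRotate.isConj hcycle (by rw [support_finRotate, hsupp])
    -- `τ` is determined only up to a rotation of its word; rotate it so that `a` comes first.
    obtain ⟨i, hi⟩ := hrot.2 (Set.mem_univ 0) (Set.mem_univ (τ⁻¹ a))
    refine ⟨τ * finRotate (m + 2) ^ i, ?_, ?_⟩
    · rw [Set.mem_ofPred_eq, Equiv.Perm.mul_apply, hi, Equiv.Perm.inv_def, Equiv.apply_symm_apply]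
    · rw [← hτ, wordCycle]
      group

lemma cdes_wordCycle (σ : Equiv.Perm (Fin (m + 1))) :
    cdes (wordCycle σ) = desNum (m + 1) σ + if σ 0 < σ (Fin.last m) then 1 else 0 := by
  rw [desNum_succ_eq_card, cdes, Finset.card_filter, Finset.card_filter, ← Equiv.sum_comp σ,
    Fin.sum_univ_castSucc]
  simp only [wordCycle_apply_castSucc, wordCycle_apply_last]

lemma cdes_add_casc {n : ℕ} {c : Equiv.Perm (Fin n)} (hc : ∀ x, c x ≠ x) :
    cdes c + casc c = n := by
  have hcasc : casc c = (Finset.univ.filter fun x => ¬ c x < x).card := by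
    unfold casc
    congr! 2 with x
    exact (not_lt.trans (hc x).symm.le_iff_lt).symm
  rw [hcasc, cdes, Finset.card_filter_add_card_filter_not, Finset.card_fin]

lemma hasCyclicFactor_one_last_iff (c : Equiv.Perm (Fin (m + 1))) (j : ℕ) :
    HasCyclicFactor (m + 1) c 1 (m + 1) j ↔
      c 0 = Fin.last m ∧ (c (Fin.last m) : ℕ) + 1 = j := by
  constructor
  · rintro ⟨x, y, z, hx, hy, hz, hxy, hyz⟩
    obtain rfl : x = 0 := Fin.ext (Nat.succ_injective hx)
    obtain rfl : y = Fin.last m := Fin.ext (Nat.succ_injective hy)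
    exact ⟨hxy, hyz ▸ hz⟩
  · rintro ⟨h0, hlast⟩
    exact ⟨0, Fin.last m, c (Fin.last m), rfl, rfl, hlast, h0, rfl⟩

end Cycles

section OneLastCycle

variable {m : ℕ}

/-- The cycle `(1 n π₁+1 ⋯ πₘ+1)` with `n = m + 2`, the general `n`-cycle mapping `1` to `n`. -/
def oneLastCycle (π : Equiv.Perm (Fin m)) : Equiv.Perm (Fin (m + 2)) :=
  wordCycle (prependLetter 0 (prependLetter (Fin.last m) π))

lemma oneLastCycle_injective : Function.Injective (oneLastCycle (m := m)) := fun _ _ h =>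
  prependLetter_injective _ <| prependLetter_injective _ <|
    wordCycle_injOn 0 (prependLetter_zero _ _) (prependLetter_zero _ _) h

lemma oneLastCycle_zero (π : Equiv.Perm (Fin m)) : oneLastCycle π 0 = Fin.last (m + 1) := by
  rw [oneLastCycle, wordCycle_prependLetter_zero, prependLetter_zero, Fin.succAbove_zero,
    Fin.succ_last]

lemma oneLastCycle_last (π : Equiv.Perm (Fin (m + 1))) :
    oneLastCycle π (Fin.last (m + 2)) = (π 0).castSucc.succ := by
  have h := wordCycle_apply_castSucc (prependLetter 0 (prependLetter (Fin.last (m + 1)) π))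
    (Fin.succ 0)
  rwa [← Fin.succ_castSucc, Fin.castSucc_zero, prependLetter_succ, prependLetter_succ,
    prependLetter_zero, prependLetter_succ, Fin.succAbove_zero, Fin.succAbove_last,
    Fin.succ_last] at h

lemma range_oneLastCycle :
    Set.range (oneLastCycle (m := m)) =
      {c | c.IsCycleOn (Set.univ : Set (Fin (m + 2))) ∧ c 0 = Fin.last (m + 1)} := by
  refine Set.Subset.antisymm ?_ ?_
  · rintro _ ⟨π, rfl⟩
    exact ⟨(image_wordCycle 0).subset ⟨_, prependLetter_zero _ _, rfl⟩, oneLastCycle_zero π⟩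
  · rintro c ⟨hc, hc0⟩
    obtain ⟨σ, hσ, rfl⟩ := (image_wordCycle 0).superset hc
    obtain ⟨τ, rfl⟩ := (range_prependLetter 0).superset hσ
    have hτ : τ 0 = Fin.last m := by
      rwa [wordCycle_prependLetter_zero, Fin.succAbove_zero, ← Fin.succ_last,
        Fin.succ_inj] at hc0
    obtain ⟨π, rfl⟩ := (range_prependLetter (Fin.last m)).superset hτ
    exact ⟨π, rfl⟩

lemma cdes_oneLastCycle (π : Equiv.Perm (Fin (m + 1))) :
    cdes (oneLastCycle π) = desNum (m + 1) π + 2 := by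
  have hlast : prependLetter 0 (prependLetter (Fin.last (m + 1)) π) 0 <
      prependLetter 0 (prependLetter (Fin.last (m + 1)) π) (Fin.last (m + 2)) := by
    rw [prependLetter_zero, ← Fin.succ_last (m + 1), prependLetter_succ, Fin.succAbove_zero]
    exact Fin.succ_pos _
  rw [oneLastCycle, cdes_wordCycle, desNum_prependLetter, desNum_prependLetter, if_pos hlast,
    if_pos (Fin.castSucc_lt_last _), if_neg (Fin.not_lt_zero _)]
  ring

end OneLastCycle

/-- The `n`-cycles with `e` cyclic descents that have `1 n j` as a cyclic factor. -/
def cyclesWithCdes (n e j : ℕ) : Set (Equiv.Perm (Fin n)) :=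
  {c | c.IsCycleOn (Set.univ : Set (Fin n)) ∧ cdes c = e ∧ HasCyclicFactor n c 1 n j}

lemma cyclesWithCdes_eq_image (m e j : ℕ) :
    cyclesWithCdes (m + 3) e j =
      oneLastCycle '' {π : Equiv.Perm (Fin (m + 1)) |
        (desNum (m + 1) π : ℤ) = e - 2 ∧ ((π 0 : ℕ) : ℤ) + 1 = j - 1} := by
  ext c
  constructor
  · rintro ⟨hc, hdes, hfactor⟩
    obtain ⟨hc0, hclast⟩ := (hasCyclicFactor_one_last_iff c j).1 hfactor
    obtain ⟨π, rfl⟩ := range_oneLastCycle.superset ⟨hc, hc0⟩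
    rw [cdes_oneLastCycle] at hdes
    rw [oneLastCycle_last, Fin.val_succ, Fin.val_castSucc] at hclast
    exact ⟨π, ⟨by omega, by omega⟩, rfl⟩
  · rintro ⟨π, ⟨hdes, hfirst⟩, rfl⟩
    obtain ⟨hc, hc0⟩ := range_oneLastCycle.subset ⟨π, rfl⟩
    refine ⟨hc, ?_, (hasCyclicFactor_one_last_iff _ j).2 ⟨hc0, ?_⟩⟩
    · rw [cdes_oneLastCycle]
      omega
    · rw [oneLastCycle_last, Fin.val_succ, Fin.val_castSucc]
      omega

theorem ncard_cyclesWithCdes {n : ℕ} (hn : 3 ≤ n) (e j : ℕ) :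
    (cyclesWithCdes n e j).ncard =
      eulerianFirst ((n : ℤ) - 2) ((e : ℤ) - 2) ((j : ℤ) - 1) := by
  obtain ⟨m, rfl⟩ : ∃ m, n = m + 3 := ⟨n - 3, by omega⟩
  have hsub : ((m + 3 : ℕ) : ℤ) - 2 = (m + 1 : ℕ) := by push_cast; ring
  rw [hsub, eulerianFirst_natCast_succ, cyclesWithCdes_eq_image,
    Set.ncard_image_of_injective _ oneLastCycle_injective]

lemma setOf_min_cdes_casc_eq {n d : ℕ} (j : ℕ) (hn : 2 ≤ n) (hd : 2 * d ≤ n) :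
    {c : Equiv.Perm (Fin n) | c.IsCycleOn (Set.univ : Set (Fin n)) ∧
        min (cdes c) (casc c) = d ∧ HasCyclicFactor n c 1 n j} =
      cyclesWithCdes n d j ∪ cyclesWithCdes n (n - d) j := by
  have : Nontrivial (Fin n) := Fin.nontrivial_iff_two_le.2 hn
  ext c
  simp only [cyclesWithCdes, Set.mem_union, Set.mem_ofPred_eq, ← and_or_left, ← or_and_right]
  refine and_congr_right fun hc => and_congr_left' ?_
  have hsum := cdes_add_casc fun x => hc.apply_ne Set.nontrivial_univ (Set.mem_univ x)
  omega

lemma disjoint_cyclesWithCdes {n e e' : ℕ} (j : ℕ) (h : e ≠ e') :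
    Disjoint (cyclesWithCdes n e j) (cyclesWithCdes n e' j) :=
  Set.disjoint_left.2 fun _ ⟨_, he, _⟩ ⟨_, he', _⟩ => h (he.symm.trans he')

theorem cycle_count_cyclicFactor_eq_general (n d j : ℕ) (hn : 3 ≤ n) (hd : 2 * d < n) :
    Nat.card {c : Equiv.Perm (Fin n) //
        c.IsCycleOn (Set.univ : Set (Fin n)) ∧ min (cdes c) (casc c) = d ∧
          HasCyclicFactor n c 1 n j} =
      eulerianFirst ((n : ℤ) - 2) ((d : ℤ) - 2) ((j : ℤ) - 1) +
        eulerianFirst ((n : ℤ) - 2) ((n : ℤ) - d - 2) ((j : ℤ) - 1) := by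
  rw [← Set.coe_ofPred, Nat.card_coe_set_eq, setOf_min_cdes_casc_eq j (by omega) hd.le,
    Set.ncard_union_eq (disjoint_cyclesWithCdes j (by omega)), ncard_cyclesWithCdes hn,
    ncard_cyclesWithCdes hn, Nat.cast_sub (by omega)]

/-- For odd `n ≥ 3`, `2 ≤ j ≤ n-1` and `0 ≤ d ≤ (n-1)/2`, the number of cyclic
permutations of `[n]` (single `n`-cycles) `c` with `min(cdes c, casc c) = d` having
`1 n j` as a cyclic factor equals `A(n-2, d-2, j-1) + A(n-2, n-d-2, j-1)`. -/
theorem cycle_count_cyclicFactor_eq (n d j : ℕ) (hodd : Odd n) (hn : 3 ≤ n)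
    (hj1 : 2 ≤ j) (hj2 : j ≤ n - 1) (hd : d ≤ (n - 1) / 2) :
    Nat.card {c : Equiv.Perm (Fin n) //
        c.IsCycleOn (Set.univ : Set (Fin n)) ∧ min (cdes c) (casc c) = d ∧
          HasCyclicFactor n c 1 n j} =
      eulerianFirst ((n : ℤ) - 2) ((d : ℤ) - 2) ((j : ℤ) - 1) +
        eulerianFirst ((n : ℤ) - 2) ((n : ℤ) - d - 2) ((j : ℤ) - 1) :=
  cycle_count_cyclicFactor_eq_general n d j hn (by omega)
end
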